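/- arXiv:1809.03089 — 2 statements merged into one kernel-verified Lean document; each statement's English description precedes it below -/
import Mathlib

section
/- Let M_κ be a multislice on n ≥ 4 points with κ_i ≥ 2 for all i ∈ [ℓ]. If A ⊆ M_κ is nonempty with vol(A) = α ∈ (0,1) and Φ(A) = 2(1−α)/(n−1), then there exist a coordinate j ∈ [n] and a set of colours S ⊆ [ℓ] with Σ_{i∈S} κ_i = αn such that A = { u ∈ M_κ : u_j ∈ S }. -/
open Finset

noncomputable section

/-- The multislice: vectors in `[ℓ]^n` whose colour counts are given by `κ`. -/
def multislice (ℓ n : ℕ) (κ : Fin ℓ → ℕ) : Finset (Fin n → Fin ℓ) :=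
  Finset.univ.filter fun u => ∀ i, (Finset.univ.filter fun j => u j = i).card = κ i

/-- Expectation with respect to the uniform measure on the multislice. -/
def msExp (ℓ n : ℕ) (κ : Fin ℓ → ℕ) (f : (Fin n → Fin ℓ) → ℝ) : ℝ :=
  (∑ u ∈ multislice ℓ n κ, f u) / ((multislice ℓ n κ).card : ℝ)

/-- The indicator variable `x_{ji}`. -/
def xvar (ℓ n : ℕ) (j : Fin n) (i : Fin ℓ) (u : Fin n → Fin ℓ) : ℝ :=
  if u j = i then 1 else 0

/-- A function on the multislice has degree one if it is of the form
`c + ∑_j ∑_i c_{ji} x_{ji}`. -/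
def degreeOne (ℓ n : ℕ) (κ : Fin ℓ → ℕ) (f : (Fin n → Fin ℓ) → ℝ) : Prop :=
  ∃ (c : ℝ) (coef : Fin n → Fin ℓ → ℝ), ∀ u ∈ multislice ℓ n κ,
    f u = c + ∑ j, ∑ i, coef j i * xvar ℓ n j i u

/-- Distance of a real number to the set `{0,1}`. -/
def dist01 (x : ℝ) : ℝ := min |x| |x - 1|

/-- A function is Boolean on the multislice if it takes values in `{0,1}` there. -/
def booleanOn (ℓ n : ℕ) (κ : Fin ℓ → ℕ) (g : (Fin n → Fin ℓ) → ℝ) : Prop :=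
  ∀ u ∈ multislice ℓ n κ, g u = 0 ∨ g u = 1

/-- A dictator: a function depending on at most one coordinate. -/
def dictator (ℓ n : ℕ) (κ : Fin ℓ → ℕ) (g : (Fin n → Fin ℓ) → ℝ) : Prop :=
  ∃ j : Fin n, ∀ u ∈ multislice ℓ n κ, ∀ v ∈ multislice ℓ n κ, u j = v j → g u = g v

/-- The volume `|A|/|M_κ|` of a subset of the multislice. -/
def msVol (ℓ n : ℕ) (κ : Fin ℓ → ℕ) (A : Finset (Fin n → Fin ℓ)) : ℝ :=
  (A.card : ℝ) / ((multislice ℓ n κ).card : ℝ)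

/-- The edge expansion `Φ(A)`: the probability that swapping two distinct coordinates (chosen
uniformly at random) of a uniformly random element of `A` gives an element outside `A`. -/
def msExpansion (ℓ n : ℕ) (A : Finset (Fin n → Fin ℓ)) : ℝ :=
  (∑ u ∈ A, ((Finset.univ.filter fun q : Fin n × Fin n =>
      q.1 ≠ q.2 ∧ (u ∘ Equiv.swap q.1 q.2) ∉ A).card : ℝ)) /
    ((A.card : ℝ) * ((n : ℝ) * ((n : ℝ) - 1)))

theorem spec_abs {E : Type*} [NormedAddCommGroup E] [InnerProductSpace ℝ E] [FiniteDimensional ℝ E]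
    (L : E →ₗ[ℝ] E) (hL : L.IsSymmetric) (c : ℝ) (hc : 0 < c)
    (hpos : ∀ h, 0 ≤ inner ℝ h (L h))
    (hgap : ∀ h, c * inner ℝ h (L h) ≤ inner ℝ (L h) (L h))
    (g : E) (hker : ∀ v, L v = 0 → inner ℝ v g = 0)
    (hg : inner ℝ g (L g) = c * inner ℝ g g) :
    L g = c • g := by
  set b := hL.eigenvectorBasis (rfl : Module.finrank ℝ E = _) with hb
  set ev := hL.eigenvalues (rfl : Module.finrank ℝ E = _) with hev
  have hLb : ∀ i, L (b i) = ev i • b i := fun i => by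
    have := hL.apply_eigenvectorBasis (rfl : Module.finrank ℝ E = _) i
    exact this
  have hbb : ∀ i, inner ℝ (b i) (b i) = (1:ℝ) := fun i => by
    rw [real_inner_self_eq_norm_sq, b.orthonormal.1 i]; norm_num
  have hLg : ∀ i, inner ℝ (b i) (L g) = ev i * inner ℝ (b i) g := fun i => by
    rw [← hL, hLb, real_inner_smul_left]
  have h0 : ∀ i, 0 ≤ ev i := fun i => by
    have := hpos (b i)
    rwa [hLb, real_inner_smul_right, hbb, mul_one] at this
  have h1 : ∀ i, c * ev i ≤ ev i * ev i := fun i => by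
    have := hgap (b i)
    rwa [hLb, real_inner_smul_right, real_inner_smul_left, real_inner_smul_right, hbb,
      mul_one] at this
  have h2 : ∀ i, ev i = 0 → inner ℝ (b i) g = 0 := fun i h => hker _ (by rw [hLb, h, zero_smul])
  have h3 : ∀ i, 0 ≤ (ev i - c) * (inner ℝ (b i) g) ^ 2 := fun i => by
    rcases (h0 i).eq_or_lt with h | h
    · rw [h2 i h.symm]; simp
    · have : c ≤ ev i := le_of_mul_le_mul_right (h1 i) h
      have : 0 ≤ ev i - c := by linarith
      positivity
  have h4 : ∑ i, (ev i - c) * (inner ℝ (b i) g) ^ 2 = 0 := by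
    rw [← b.sum_inner_mul_inner g (L g), ← b.sum_inner_mul_inner g g, Finset.mul_sum,
      ← sub_eq_zero, ← Finset.sum_sub_distrib] at hg
    rw [← hg]
    refine Finset.sum_congr rfl fun i _ => ?_
    rw [hLg, real_inner_comm]; ring
  have h5 := (Finset.sum_eq_zero_iff_of_nonneg (fun i _ => h3 i)).1 h4
  apply b.repr.injective
  ext i
  rw [b.repr_apply_apply, b.repr_apply_apply]
  rw [hLg, real_inner_smul_right]
  have := h5 i (mem_univ i)
  rcases mul_eq_zero.1 this with h | h
  · rw [sub_eq_zero.1 h]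
  · rw [pow_eq_zero_iff two_ne_zero] at h
    rw [h]; simp

section
variable {ι X : Type*} [Fintype ι] [DecidableEq ι] [Fintype X]

/-- correlation function -/
def Rc (f : (ι → X) → ℝ) (s : Equiv.Perm ι) : ℝ := ∑ u : ι → X, f u * f (u ∘ s)

theorem sum_act (F : (ι → X) → ℝ) (s : Equiv.Perm ι) : ∑ u : ι → X, F (u ∘ s) = ∑ u, F u :=
  Equiv.sum_comp (s.symm.arrowCongr (Equiv.refl X)) F

theorem Rc_two (f : (ι → X) → ℝ) (s t : Equiv.Perm ι) :
    ∑ u : ι → X, f (u ∘ s) * f (u ∘ t) = Rc f (s⁻¹ * t) := by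
  unfold Rc
  rw [← sum_act (fun u => f u * f (u ∘ ⇑(s⁻¹ * t))) s]
  refine Finset.sum_congr rfl fun u _ => ?_
  have : (u ∘ ⇑s) ∘ ⇑(s⁻¹ * t) = u ∘ t := by ext x; simp
  rw [this]

theorem Rc_inv (f : (ι → X) → ℝ) (s : Equiv.Perm ι) : Rc f s⁻¹ = Rc f s := by
  have := Rc_two f s 1
  rw [mul_one] at this
  rw [← this]
  exact Finset.sum_congr rfl fun u _ => by simp [mul_comm]

theorem Rc_triple (f : (ι → X) → ℝ) (s t : Equiv.Perm ι) (hs : s * s = 1) (ht : t * t = 1)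
    (hst : s * t * s = t * s * t) :
    Rc f s + Rc f t + Rc f (s * t * s) ≤ Rc f 1 + 2 * Rc f (s * t) := by
  let h : (ι → X) → ℝ := fun u => f u + f (u ∘ ⇑(s * t)) + f (u ∘ ⇑(t * s)) - f (u ∘ s) - f (u ∘ t)
    - f (u ∘ ⇑(s * t * s))
  have cmp : ∀ (u : ι → X) (a b : Equiv.Perm ι), (u ∘ ⇑a) ∘ ⇑b = u ∘ ⇑(a * b) := fun _ _ _ => rfl
  have one : ∀ (u : ι → X), u ∘ ⇑(1 : Equiv.Perm ι) = u := fun _ => rfl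
  have h1 : ∀ u : ι → X, h (u ∘ s) = - h u := fun u => by
    simp only [h, cmp, ← mul_assoc, hs, one_mul, one]; ring
  have h2 : ∀ u : ι → X, h (u ∘ t) = - h u := fun u => by
    have z : t * (s * t * s) = s * t := by
      rw [hst, ← mul_assoc, ← mul_assoc, ht, one_mul]
    have z' : t * (s * t) = s * t * s := by rw [hst, mul_assoc]
    have z'' : t * (t * s) = s := by rw [← mul_assoc, ht, one_mul]
    simp only [h, cmp, z, z', z'', ht, one]; ring
  have k1 : ∀ F : (ι → X) → ℝ, ∑ u, F (u ∘ s) * h u = - ∑ u, F u * h u := fun F => by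
    rw [← sum_act (fun u => F u * h u) s, ← Finset.sum_neg_distrib]
    simp [h1]
  have k2 : ∀ F : (ι → X) → ℝ, ∑ u, F (u ∘ t) * h u = - ∑ u, F u * h u := fun F => by
    rw [← sum_act (fun u => F u * h u) t, ← Finset.sum_neg_distrib]
    simp [h2]
  have e1 : ∑ u, f (u ∘ ⇑(s * t)) * h u = ∑ u, f u * h u := by
    have := k1 (fun u => f (u ∘ t))
    simp only [cmp] at this
    rw [this, k2]; ring
  have e2 : ∑ u, f (u ∘ ⇑(t * s)) * h u = ∑ u, f u * h u := by
    have := k2 (fun u => f (u ∘ s))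
    simp only [cmp] at this
    rw [this, k1]; ring
  have e3 : ∑ u, f (u ∘ ⇑(s * t * s)) * h u = - ∑ u, f u * h u := by
    have := k1 (fun u => f (u ∘ ⇑(t * s)))
    simp only [cmp, ← mul_assoc] at this
    rw [this, e2]
  have e4 : ∑ u, h u * h u = 6 * ∑ u, f u * h u := by
    have : ∀ u, h u * h u = f u * h u + f (u ∘ ⇑(s * t)) * h u + f (u ∘ ⇑(t * s)) * h u
      - f (u ∘ s) * h u - f (u ∘ t) * h u - f (u ∘ ⇑(s * t * s)) * h u := fun u => by
      conv_lhs => enter [1]; simp only [h]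
      ring
    simp only [this, Finset.sum_add_distrib, Finset.sum_sub_distrib, e1, e2, e3, k1, k2]
    ring
  have e5 : ∑ u, f u * h u = Rc f 1 + 2 * Rc f (s * t) - Rc f s - Rc f t - Rc f (s * t * s) := by
    have : Rc f (t * s) = Rc f (s * t) := by
      rw [← Rc_inv, mul_inv_rev, inv_eq_of_mul_eq_one_right hs, inv_eq_of_mul_eq_one_right ht]
    rw [two_mul]
    nth_rw 2 [← this]
    simp only [h, Rc, mul_sub, mul_add, Finset.sum_add_distrib, Finset.sum_sub_distrib, one]
    ring
  have e6 : 0 ≤ ∑ u, h u * h u := Finset.sum_nonneg fun u _ => mul_self_nonneg _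
  linarith

/-- inner product of differences -/
def Gc (f : (ι → X) → ℝ) (a b c d : ι) : ℝ :=
  ∑ u, (f u - f (u ∘ Equiv.swap a b)) * (f u - f (u ∘ Equiv.swap c d))

theorem Gc_eq (f : (ι → X) → ℝ) (a b c d : ι) : Gc f a b c d =
    Rc f 1 - Rc f (Equiv.swap a b) - Rc f (Equiv.swap c d)
      + Rc f (Equiv.swap a b * Equiv.swap c d) := by
  have h := Rc_two f (Equiv.swap a b) (Equiv.swap c d)
  rw [Equiv.swap_inv] at h
  rw [← h]
  simp only [Gc, Rc, ← Finset.sum_add_distrib, ← Finset.sum_sub_distrib]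
  refine Finset.sum_congr rfl fun u _ => ?_
  have : u ∘ ⇑(1 : Equiv.Perm ι) = u := rfl
  rw [this]; ring

theorem Gc_disj (f : (ι → X) → ℝ) (a b c d : ι) (h1 : a ≠ c) (h2 : a ≠ d) (h3 : b ≠ c)
    (h4 : b ≠ d) : 4 * Gc f a b c d = ∑ u, (f u - f (u ∘ Equiv.swap a b)
      - (f (u ∘ Equiv.swap c d) - f (u ∘ Equiv.swap a b ∘ Equiv.swap c d))) ^ 2 := by
  set s := Equiv.swap a b with hs
  set t := Equiv.swap c d with ht
  have hc : s * t = t * s := by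
    refine Equiv.Perm.Disjoint.commute ?_
    intro x
    by_cases hx : x = a ∨ x = b
    · right
      rcases hx with rfl | rfl
      · exact Equiv.swap_apply_of_ne_of_ne h1 h2
      · exact Equiv.swap_apply_of_ne_of_ne h3 h4
    · push Not at hx
      left; exact Equiv.swap_apply_of_ne_of_ne hx.1 hx.2
  have hss : s * s = 1 := Equiv.swap_mul_self a b
  have htt : t * t = 1 := Equiv.swap_mul_self c d
  have cmp : ∀ (u : ι → X), u ∘ ⇑s ∘ ⇑t = u ∘ ⇑(s * t) := fun _ => rfl
  have hsi : s⁻¹ = s := Equiv.swap_inv _ _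
  have hti : t⁻¹ = t := Equiv.swap_inv _ _
  rw [Gc_eq]
  have key : ∀ u : ι → X, (f u - f (u ∘ s) - (f (u ∘ t) - f (u ∘ s ∘ t))) ^ 2 =
    f (u ∘ ⇑(1 : Equiv.Perm ι)) * f (u ∘ ⇑(1 : Equiv.Perm ι)) + f (u ∘ s) * f (u ∘ s)
    + f (u ∘ t) * f (u ∘ t) + f (u ∘ ⇑(s * t)) * f (u ∘ ⇑(s * t))
    - 2 * (f (u ∘ ⇑(1 : Equiv.Perm ι)) * f (u ∘ s)) - 2 * (f (u ∘ ⇑(1 : Equiv.Perm ι)) * f (u ∘ t))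
    + 2 * (f (u ∘ ⇑(1 : Equiv.Perm ι)) * f (u ∘ ⇑(s * t)))
    + 2 * (f (u ∘ s) * f (u ∘ t)) - 2 * (f (u ∘ s) * f (u ∘ ⇑(s * t)))
    - 2 * (f (u ∘ t) * f (u ∘ ⇑(s * t))) := fun u => by
      have : u ∘ ⇑(1 : Equiv.Perm ι) = u := rfl
      rw [this, cmp]; ring
  simp only [key, Finset.sum_add_distrib, Finset.sum_sub_distrib, ← Finset.mul_sum, Rc_two,
    mul_inv_rev, hsi, hti]
  have z1 : t * s * (s * t) = 1 := by rw [mul_assoc, ← mul_assoc s, hss, one_mul, htt]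
  have z2 : s * (s * t) = t := by rw [← mul_assoc, hss, one_mul]
  have z3 : t * (s * t) = s := by rw [hc, ← mul_assoc, htt, one_mul]
  rw [z1, z2, z3, hss, htt]
  simp only [inv_one, one_mul]
  ring

theorem Gc_triple (f : (ι → X) → ℝ) (a b c : ι) :
    (1/2 : ℝ) * ((if b = c then Gc f a b a b else 0) + (if c = a then Gc f b c b c else 0)
      + (if a = b then Gc f c a c a else 0))
    + 1/4 * (Gc f a b a b + Gc f b c b c + Gc f c a c a)
    ≤ Gc f a b a c + Gc f b c b a + Gc f c a c b := by
  have G0 : ∀ a b c, Gc f a a b c = 0 := fun a b c => by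
    simp [Gc]
  have G0' : ∀ a b c, Gc f b c a a = 0 := fun a b c => by
    simp [Gc]
  have Gs : ∀ a b, Gc f a b a b = Gc f b a b a := fun a b => by
    simp only [Gc, Equiv.swap_comm a b]
  have Gp : ∀ a b, 0 ≤ Gc f a b a b := fun a b => Finset.sum_nonneg fun u _ => mul_self_nonneg _
  by_cases h1 : b = c
  · subst h1
    by_cases h2 : b = a
    · subst h2; simp [G0]
    · simp only [h2, Ne.symm h2, if_true, if_false, G0, G0', Gs b a]
      linarith
  by_cases h2 : c = a
  · subst h2
    simp only [h1, Ne.symm h1, if_true, if_false, G0, G0', Gs c b]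
    linarith
  by_cases h3 : a = b
  · subst h3
    simp only [h2, Ne.symm h2, if_true, if_false, G0, G0', Gs a c]
    linarith
  simp only [h1, h2, h3, if_false]
  set s := Equiv.swap a b with hs
  set t := Equiv.swap b c with ht
  have hss : s * s = 1 := Equiv.swap_mul_self a b
  have htt : t * t = 1 := Equiv.swap_mul_self b c
  have hw : Equiv.swap c a = s * t * s := by
    rw [hs, ht, Equiv.swap_comm a b, Equiv.swap_comm b c,
      Equiv.swap_mul_swap_mul_swap (Ne.symm h1) h2, Equiv.swap_comm]
  have hw' : Equiv.swap c a = t * s * t := by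
    rw [hs, ht, Equiv.swap_mul_swap_mul_swap h3 (Ne.symm h2)]
  have main := Rc_triple f s t hss htt (hw.symm.trans hw')
  have hts : Rc f (t * s) = Rc f (s * t) := by
    rw [← Rc_inv, mul_inv_rev, hs, ht, Equiv.swap_inv, Equiv.swap_inv]
  simp only [Gc_eq, Equiv.swap_mul_self]
  rw [← hw] at main
  rw [Equiv.swap_comm a c, Equiv.swap_comm b a, Equiv.swap_comm c b, ← hs, ← ht]
  have q1 : s * Equiv.swap c a = t * s := by rw [hw, ← mul_assoc, ← mul_assoc, hss, one_mul]
  have q2 : Equiv.swap c a * t = t * s := by rw [hw', mul_assoc, htt, mul_one]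
  rw [q1, q2, hts]
  linarith

theorem sum_split (g : ι → ι → ℝ) (hg : ∀ c d, g c d = g d c) (h0 : ∀ c, g c c = 0) (a b : ι)
    (hab : a ≠ b) :
    ∑ c, ∑ d, g c d = (∑ c, ∑ d, if a ≠ c ∧ a ≠ d ∧ b ≠ c ∧ b ≠ d then g c d else 0)
      + 2 * ∑ d, (g a d + g b d) - 2 * g a b := by
  have key : ∀ c d, g c d = (if a ≠ c ∧ a ≠ d ∧ b ≠ c ∧ b ≠ d then g c d else 0)
      + (if a = c then g a d else 0) + (if b = c then g b d else 0)
      + (if a = d then g a c else 0) + (if b = d then g b c else 0)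
      - (if a = c then (if b = d then g a b else 0) else 0)
      - (if b = c then (if a = d then g a b else 0) else 0) := by
    intro c d
    by_cases h1 : a = c <;> by_cases h2 : a = d <;> by_cases h3 : b = c <;> by_cases h4 : b = d
    all_goals first
      | exact absurd (h1.trans h3.symm) hab
      | exact absurd (h2.trans h4.symm) hab
      | skip
    all_goals simp only [h1, h2, h3, h4]
    all_goals ((try subst h1); (try subst h2); (try subst h3); (try subst h4))
    all_goals simp_all
  have e : ∑ c, ∑ d, g c d = ∑ c, ∑ d, ((if a ≠ c ∧ a ≠ d ∧ b ≠ c ∧ b ≠ d then g c d else 0)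
      + (if a = c then g a d else 0) + (if b = c then g b d else 0)
      + (if a = d then g a c else 0) + (if b = d then g b c else 0)
      - (if a = c then (if b = d then g a b else 0) else 0)
      - (if b = c then (if a = d then g a b else 0) else 0)) :=
    Finset.sum_congr rfl fun c _ => Finset.sum_congr rfl fun d _ => key c d
  have w : ∀ (x : ι) (F : ι → ℝ), ∑ c, ∑ d, (if x = c then F d else 0) = ∑ d, F d := by
    intro x F
    rw [Finset.sum_comm]
    simp
  rw [e]
  simp only [Finset.sum_add_distrib, Finset.sum_sub_distrib, w]
  simp only [Finset.sum_ite_eq, Finset.mem_univ, if_true]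
  ring

/-- The disjoint part. -/
def Disj (f : (ι → X) → ℝ) : ℝ :=
  ∑ a, ∑ b, ∑ c, ∑ d, if a ≠ c ∧ a ≠ d ∧ b ≠ c ∧ b ≠ d then Gc f a b c d else 0

theorem gap_ineq (f : (ι → X) → ℝ) :
    Disj f + (Fintype.card ι : ℝ) * ∑ a, ∑ b, Gc f a b a b ≤ ∑ a, ∑ b, ∑ c, ∑ d, Gc f a b c d := by
  have G0 : ∀ a b c, Gc f a a b c = 0 := fun a b c => by
    simp [Gc]
  have G0' : ∀ a b c, Gc f b c a a = 0 := fun a b c => by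
    simp [Gc]
  have Gl : ∀ a b c d, Gc f a b c d = Gc f b a c d := fun a b c d => by
    simp only [Gc, Equiv.swap_comm a b]
  have Gr : ∀ a b c d, Gc f a b c d = Gc f a b d c := fun a b c d => by
    simp only [Gc, Equiv.swap_comm c d]
  set Q := ∑ a, ∑ b, Gc f a b a b with hQ
  set S := ∑ a, ∑ b, ∑ d, Gc f a b a d with hS
  have hS' : ∑ a, ∑ b, ∑ d, Gc f a b b d = S := by
    rw [Finset.sum_comm]
    exact Finset.sum_congr rfl fun a _ => Finset.sum_congr rfl fun b _ =>
      Finset.sum_congr rfl fun d _ => Gl _ _ _ _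
  have e1 : ∑ a, ∑ b, ∑ c, ∑ d, Gc f a b c d = Disj f + 4 * S - 2 * Q := by
    have : ∀ a b, ∑ c, ∑ d, Gc f a b c d =
      (∑ c, ∑ d, if a ≠ c ∧ a ≠ d ∧ b ≠ c ∧ b ≠ d then Gc f a b c d else 0)
      + 2 * (∑ d, Gc f a b a d + ∑ d, Gc f a b b d) - 2 * Gc f a b a b := by
      intro a b
      by_cases h : a = b
      · subst h; simp [G0]
      · rw [sum_split (Gc f a b) (Gr a b) (fun c => G0' c a b) a b h, Finset.sum_add_distrib]
    simp only [this, Finset.sum_add_distrib, Finset.sum_sub_distrib, ← Finset.mul_sum, hS',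
      ← hS, ← hQ]
    unfold Disj
    ring
  have e2 : ∑ a, ∑ b, ∑ c, ((1/2 : ℝ) * ((if b = c then Gc f a b a b else 0)
      + (if c = a then Gc f b c b c else 0)
      + (if a = b then Gc f c a c a else 0))
    + 1/4 * (Gc f a b a b + Gc f b c b c + Gc f c a c a))
    ≤ ∑ a, ∑ b, ∑ c, (Gc f a b a c + Gc f b c b a + Gc f c a c b) :=
    Finset.sum_le_sum fun a _ => Finset.sum_le_sum fun b _ => Finset.sum_le_sum fun c _ =>
      Gc_triple f a b c
  have rot : ∀ F : ι → ι → ι → ℝ, ∑ a, ∑ b, ∑ c, F b c a = ∑ a, ∑ b, ∑ c, F a b c := by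
    intro F
    rw [Finset.sum_comm]
    refine Finset.sum_congr rfl fun a _ => ?_
    rw [Finset.sum_comm]
  have rot2 : ∀ F : ι → ι → ι → ℝ, ∑ a, ∑ b, ∑ c, F c a b = ∑ a, ∑ b, ∑ c, F a b c := by
    intro F
    rw [← rot (fun a b c => F c a b)]
  have r1 := rot (fun a b c => Gc f a b a c)
  have r2 := rot2 (fun a b c => Gc f a b a c)
  have r3 := rot (fun a b c => Gc f a b a b)
  have r4 := rot2 (fun a b c => Gc f a b a b)
  have r5 := rot (fun a b c => if b = c then Gc f a b a b else 0)
  have r6 := rot2 (fun a b c => if b = c then Gc f a b a b else 0)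
  have r7 : ∑ a, ∑ b, ∑ c : ι, Gc f a b a b = Fintype.card ι * Q := by
    simp [hQ, Finset.mul_sum]
  have r8 : ∑ a, ∑ b, ∑ c, (if b = c then Gc f a b a b else 0) = Q := by
    simp [hQ]
  simp only [Finset.sum_add_distrib, ← Finset.mul_sum, r1, r2, r3, r4, r5, r6, r7, r8, ← hS] at e2
  rw [e1]
  linarith

theorem Disj_nonneg (f : (ι → X) → ℝ) : 0 ≤ Disj f := by
  refine Finset.sum_nonneg fun a _ => Finset.sum_nonneg fun b _ => Finset.sum_nonneg fun c _ =>
    Finset.sum_nonneg fun d _ => ?_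
  split_ifs with h
  · have := Gc_disj f a b c d h.1 h.2.1 h.2.2.1 h.2.2.2
    have h2 : 0 ≤ ∑ u, (f u - f (u ∘ Equiv.swap a b)
      - (f (u ∘ Equiv.swap c d) - f (u ∘ Equiv.swap a b ∘ Equiv.swap c d))) ^ 2 :=
      Finset.sum_nonneg fun u _ => sq_nonneg _
    linarith
  · exact le_rfl

theorem Disj_zero (f : (ι → X) → ℝ) (h : Disj f ≤ 0) (a b c d : ι) (h1 : a ≠ c) (h2 : a ≠ d)
    (h3 : b ≠ c) (h4 : b ≠ d) (u : ι → X) : f u - f (u ∘ Equiv.swap a b)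
      = f (u ∘ Equiv.swap c d) - f (u ∘ Equiv.swap a b ∘ Equiv.swap c d) := by
  have nn : ∀ a b c d, 0 ≤ if a ≠ c ∧ a ≠ d ∧ b ≠ c ∧ b ≠ d then Gc f a b c d else 0 := by
    intro a b c d
    split_ifs with h
    · have := Gc_disj f a b c d h.1 h.2.1 h.2.2.1 h.2.2.2
      have h2 : 0 ≤ ∑ u, (f u - f (u ∘ Equiv.swap a b)
        - (f (u ∘ Equiv.swap c d) - f (u ∘ Equiv.swap a b ∘ Equiv.swap c d))) ^ 2 :=
        Finset.sum_nonneg fun u _ => sq_nonneg _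
      linarith
    · exact le_rfl
  have z : Disj f = 0 := le_antisymm h (Disj_nonneg f)
  unfold Disj at z
  have z1 := (Finset.sum_eq_zero_iff_of_nonneg (fun a _ => Finset.sum_nonneg fun b _ =>
    Finset.sum_nonneg fun c _ => Finset.sum_nonneg fun d _ => nn a b c d)).1 z a (mem_univ _)
  have z2 := (Finset.sum_eq_zero_iff_of_nonneg (fun b _ =>
    Finset.sum_nonneg fun c _ => Finset.sum_nonneg fun d _ => nn a b c d)).1 z1 b (mem_univ _)
  have z3 := (Finset.sum_eq_zero_iff_of_nonneg (fun c _ =>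
    Finset.sum_nonneg fun d _ => nn a b c d)).1 z2 c (mem_univ _)
  have z4 := (Finset.sum_eq_zero_iff_of_nonneg (fun d _ => nn a b c d)).1 z3 d (mem_univ _)
  rw [if_pos ⟨h1, h2, h3, h4⟩] at z4
  have z5 := Gc_disj f a b c d h1 h2 h3 h4
  rw [z4, mul_zero] at z5
  have z6 := (Finset.sum_eq_zero_iff_of_nonneg (fun u _ => sq_nonneg _)).1 z5.symm u (mem_univ _)
  rw [pow_eq_zero_iff two_ne_zero] at z6
  linarith

/-- The Laplacian. -/
def Lap (f : (ι → X) → ℝ) (u : ι → X) : ℝ := ∑ a, ∑ b, (f u - f (u ∘ Equiv.swap a b))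

theorem Lap_symm (f g : (ι → X) → ℝ) : ∑ u, Lap f u * g u = ∑ u, f u * Lap g u := by
  simp only [Lap, Finset.sum_mul, Finset.mul_sum]
  rw [Finset.sum_comm, Finset.sum_comm (s := univ (α := ι → X))]
  refine Finset.sum_congr rfl fun a _ => ?_
  rw [Finset.sum_comm, Finset.sum_comm (s := univ (α := ι → X))]
  refine Finset.sum_congr rfl fun b _ => ?_
  simp only [sub_mul, mul_sub, Finset.sum_sub_distrib]
  congr 1
  rw [← sum_act (fun u => f u * g (u ∘ ⇑(Equiv.swap a b))) (Equiv.swap a b)]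
  refine Finset.sum_congr rfl fun u _ => ?_
  have : (u ∘ ⇑(Equiv.swap a b)) ∘ ⇑(Equiv.swap a b) = u := by ext x; simp
  rw [this]

theorem Lap_quad (f : (ι → X) → ℝ) :
    2 * ∑ u, f u * Lap f u = ∑ a, ∑ b, Gc f a b a b := by
  simp only [Lap, Finset.mul_sum]
  rw [Finset.sum_comm]
  refine Finset.sum_congr rfl fun a _ => ?_
  rw [Finset.sum_comm]
  refine Finset.sum_congr rfl fun b _ => ?_
  rw [Gc_eq, Equiv.swap_mul_self]
  have h1 : Rc f 1 = ∑ u, f u * f u := rfl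
  have h2 : Rc f (Equiv.swap a b) = ∑ u, f u * f (u ∘ Equiv.swap a b) := rfl
  rw [← Finset.mul_sum]
  simp only [mul_sub, Finset.sum_sub_distrib, ← h1, ← h2]
  ring

theorem Lap_sq (f : (ι → X) → ℝ) :
    ∑ u, Lap f u * Lap f u = ∑ a, ∑ b, ∑ c, ∑ d, Gc f a b c d := by
  simp only [Lap, Gc, Finset.sum_mul_sum]
  rw [Finset.sum_comm]
  refine Finset.sum_congr rfl fun a _ => ?_
  have : ∀ u : ι → X, ∑ c, ∑ b, ∑ d, (f u - f (u ∘ Equiv.swap a b)) * (f u - f (u ∘ Equiv.swap c d))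
    = ∑ b, ∑ c, ∑ d, (f u - f (u ∘ Equiv.swap a b)) * (f u - f (u ∘ Equiv.swap c d)) :=
    fun u => Finset.sum_comm
  simp only [this]
  rw [Finset.sum_comm]
  refine Finset.sum_congr rfl fun b _ => ?_
  rw [Finset.sum_comm]
  refine Finset.sum_congr rfl fun c _ => ?_
  rw [Finset.sum_comm]

/-- Laplacian as a linear map on Euclidean space. -/
def LapE : EuclideanSpace ℝ (ι → X) →ₗ[ℝ] EuclideanSpace ℝ (ι → X) where
  toFun f := WithLp.toLp 2 (Lap f.ofLp)
  map_add' f g := by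
    ext u
    simp only [Lap, PiLp.add_apply, ← Finset.sum_add_distrib]
    refine Finset.sum_congr rfl fun a _ => Finset.sum_congr rfl fun b _ => ?_
    ring
  map_smul' r f := by
    ext u
    simp only [Lap, PiLp.smul_apply, Finset.smul_sum, RingHom.id_apply]
    refine Finset.sum_congr rfl fun a _ => Finset.sum_congr rfl fun b _ => ?_
    simp only [smul_eq_mul]
    ring

theorem inner_E (f g : EuclideanSpace ℝ (ι → X)) : inner ℝ f g = ∑ u, f u * g u := by
  rw [PiLp.inner_apply]
  refine Finset.sum_congr rfl fun u _ => ?_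
  simp [mul_comm]

/-- Equality case of the Poincare inequality. -/
theorem equality_case [Nonempty ι] (g : (ι → X) → ℝ)
    (hker : ∀ v : (ι → X) → ℝ, (∀ u a b, v (u ∘ Equiv.swap a b) = v u) → ∑ u, v u * g u = 0)
    (hg : ∑ u, g u * Lap g u = 2 * Fintype.card ι * ∑ u, g u * g u) : Disj g ≤ 0 := by
  have gap : ∀ f : (ι → X) → ℝ, Disj f + (2 * Fintype.card ι) * ∑ u, f u * Lap f u ≤
      ∑ u, Lap f u * Lap f u := fun f => by
    have := gap_ineq f
    rw [← Lap_sq, ← Lap_quad] at this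
    linarith
  have Gp : ∀ (f : (ι → X) → ℝ) a b, 0 ≤ Gc f a b a b := fun f a b =>
    Finset.sum_nonneg fun u _ => mul_self_nonneg _
  have hc : (0:ℝ) < 2 * Fintype.card ι := by
    have : 0 < Fintype.card ι := Fintype.card_pos
    positivity
  have key := spec_abs (LapE (ι := ι) (X := X)) (fun f h => by
      rw [inner_E, inner_E]; exact Lap_symm _ _) (2 * Fintype.card ι) hc
    (fun h => by
      rw [inner_E]
      have := Lap_quad h.ofLp
      have h2 : 0 ≤ ∑ a, ∑ b, Gc h.ofLp a b a b :=
        Finset.sum_nonneg fun a _ => Finset.sum_nonneg fun b _ => Gp _ _ _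
      change 0 ≤ ∑ u, h.ofLp u * Lap h.ofLp u
      linarith)
    (fun h => by
      rw [inner_E, inner_E]
      have := gap h.ofLp
      have := Disj_nonneg h.ofLp
      change (2 * Fintype.card ι : ℝ) * ∑ u, h.ofLp u * Lap h.ofLp u ≤ ∑ u, Lap h.ofLp u * Lap h.ofLp u
      linarith)
    (WithLp.toLp 2 g)
    (fun v hv => by
      rw [inner_E]
      refine hker v.ofLp fun u a b => ?_
      have hv' : ∀ u, Lap v.ofLp u = 0 := fun u => congrFun (congrArg WithLp.ofLp hv) u
      have q := Lap_quad v.ofLp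
      simp only [hv', mul_zero, Finset.sum_const_zero] at q
      have z1 := (Finset.sum_eq_zero_iff_of_nonneg (fun a _ => Finset.sum_nonneg fun b _ =>
        Gp v.ofLp a b)).1 q.symm a (mem_univ _)
      have z2 := (Finset.sum_eq_zero_iff_of_nonneg (fun b _ =>
        Gp v.ofLp a b)).1 z1 b (mem_univ _)
      have z3 := (Finset.sum_eq_zero_iff_of_nonneg (fun u _ => mul_self_nonneg _)).1 z2 u
        (mem_univ _)
      have := mul_self_eq_zero.1 z3
      linarith)
    (by rw [inner_E, inner_E]; exact hg)
  have key' : ∀ u, Lap g u = 2 * Fintype.card ι * g u := fun u =>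
    congrFun (congrArg WithLp.ofLp key) u
  have h1 := gap g
  have h2 : ∑ u, Lap g u * Lap g u = 2 * Fintype.card ι * ∑ u, g u * Lap g u := by
    rw [Finset.mul_sum]
    refine Finset.sum_congr rfl fun u _ => ?_
    rw [key' u]; ring
  linarith

end

theorem mem_swap {ℓ n : ℕ} {κ : Fin ℓ → ℕ} {u : Fin n → Fin ℓ} (σ : Equiv.Perm (Fin n)) :
    u ∘ σ ∈ multislice ℓ n κ ↔ u ∈ multislice ℓ n κ := by
  have key : ∀ i, (Finset.univ.filter fun j => (u ∘ σ) j = i).card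
      = (Finset.univ.filter fun j => u j = i).card := fun i => by
    refine Finset.card_bij (fun j _ => σ j) ?_ ?_ ?_
    · intro j hj; simpa using hj
    · intro j _ k _ h; exact σ.injective h
    · intro k hk; exact ⟨σ.symm k, by simpa using hk, by simp⟩
  simp only [multislice, Finset.mem_filter, Finset.mem_univ, true_and, key]

theorem connect {ℓ n : ℕ} {κ : Fin ℓ → ℕ} {β : Type*} (S : Set (Fin n))
    (h : (Fin n → Fin ℓ) → β)
    (hinv : ∀ u p q, p ∉ S → q ∉ S → h (u ∘ Equiv.swap p q) = h u) :
    ∀ (N : ℕ) (u v : Fin n → Fin ℓ), u ∈ multislice ℓ n κ → v ∈ multislice ℓ n κ →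
      (∀ j ∈ S, u j = v j) → (Finset.univ.filter fun j => u j ≠ v j).card ≤ N → h u = h v := by
  intro N
  induction N with
  | zero =>
    intro u v _ _ _ hN
    have : u = v := by
      ext1 j
      by_contra hj
      have : j ∈ (Finset.univ.filter fun j => u j ≠ v j) := by simp [hj]
      rw [Finset.card_eq_zero.1 (Nat.le_zero.1 hN)] at this
      simp at this
    rw [this]
  | succ N ih =>
    intro u v hu hv hS hN
    by_cases he : u = v
    · rw [he]
    obtain ⟨j, hj⟩ := Function.ne_iff.1 he
    have hk : ∃ k, u k = v j ∧ v k ≠ v j := by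
      by_contra hcon
      push Not at hcon
      have hsub : (Finset.univ.filter fun k => u k = v j) ⊆ Finset.univ.filter fun k => v k = v j := by
        intro k hk
        simp only [Finset.mem_filter, Finset.mem_univ, true_and] at hk ⊢
        exact hcon k hk
      have hu' := (Finset.mem_filter.1 hu).2 (v j)
      have hv' := (Finset.mem_filter.1 hv).2 (v j)
      have := Finset.eq_of_subset_of_card_le hsub (by rw [hu', hv'])
      have hjm : j ∈ Finset.univ.filter fun k => v k = v j := by simp
      rw [← this] at hjm
      simp at hjm
      exact hj hjm
    obtain ⟨k, hk1, hk2⟩ := hk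
    have hjS : j ∉ S := fun h => hj (hS j h)
    have hkS : k ∉ S := fun h => hk2 (by rw [← hS k h, hk1])
    have hkj : k ≠ j := fun h => hk2 (by rw [h])
    rw [← hinv u j k hjS hkS]
    refine ih _ v ((mem_swap _).2 hu) hv ?_ ?_
    · intro i hi
      have h1 : i ≠ j := fun h => hjS (h ▸ hi)
      have h2 : i ≠ k := fun h => hkS (h ▸ hi)
      simp only [Function.comp, Equiv.swap_apply_of_ne_of_ne h1 h2]
      exact hS i hi
    · have hlt : (Finset.univ.filter fun i => (u ∘ Equiv.swap j k) i ≠ v i).card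
          < (Finset.univ.filter fun i => u i ≠ v i).card := by
        apply Finset.card_lt_card
        rw [Finset.ssubset_iff_of_subset]
        · exact ⟨j, by simp [hj], by simp [hk1]⟩
        · intro i hi
          simp only [Finset.mem_filter, Finset.mem_univ, true_and, Function.comp] at hi ⊢
          by_cases h1 : i = j
          · rw [h1]; exact hj
          by_cases h2 : i = k
          · rw [h2, hk1]; exact hk2.symm
          rwa [Equiv.swap_apply_of_ne_of_ne h1 h2] at hi
      omega

theorem connect' {ℓ n : ℕ} {κ : Fin ℓ → ℕ} {β : Type*} (S : Set (Fin n))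
    (h : (Fin n → Fin ℓ) → β)
    (hinv : ∀ u p q, p ∉ S → q ∉ S → h (u ∘ Equiv.swap p q) = h u)
    (u v : Fin n → Fin ℓ) (hu : u ∈ multislice ℓ n κ) (hv : v ∈ multislice ℓ n κ)
    (hS : ∀ j ∈ S, u j = v j) : h u = h v :=
  connect S h hinv _ u v hu hv hS le_rfl

/-- find a coordinate of a given colour outside two differently coloured coordinates -/
theorem find_colour {ℓ n : ℕ} {κ : Fin ℓ → ℕ} (hκ : ∀ i, 2 ≤ κ i) {u : Fin n → Fin ℓ}
    (hu : u ∈ multislice ℓ n κ) (a b : Fin n) (hab : u a ≠ u b) (z : Fin ℓ) :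
    ∃ p, p ≠ a ∧ p ≠ b ∧ u p = z := by
  by_contra hcon
  push Not at hcon
  have hz := (Finset.mem_filter.1 hu).2 z
  have h2 := hκ z
  rw [← hz] at h2
  obtain ⟨p, hp, q, hq, hpq⟩ := Finset.one_lt_card.1 h2
  simp only [Finset.mem_filter, Finset.mem_univ, true_and] at hp hq
  have e1 : p = a ∨ p = b := by
    by_contra h; push Not at h; exact hcon p h.1 h.2 hp
  have e2 : q = a ∨ q = b := by
    by_contra h; push Not at h; exact hcon q h.1 h.2 hq
  rcases e1 with rfl | rfl <;> rcases e2 with rfl | rfl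
  · exact hpq rfl
  · exact hab (hp.trans hq.symm)
  · exact hab (hq.trans hp.symm)
  · exact hpq rfl

theorem no_disj {ℓ n : ℕ} {κ : Fin ℓ → ℕ} (hκ : ∀ i, 2 ≤ κ i) (f : (Fin n → Fin ℓ) → ℝ)
    (hf : ∀ u, f u = 0 ∨ f u = 1)
    (sq : ∀ a b c d : Fin n, a ≠ c → a ≠ d → b ≠ c → b ≠ d → ∀ u, f u - f (u ∘ Equiv.swap a b)
      = f (u ∘ Equiv.swap c d) - f (u ∘ Equiv.swap a b ∘ Equiv.swap c d))
    (a b c d : Fin n) (hac : a ≠ c) (had : a ≠ d) (hbc : b ≠ c) (hbd : b ≠ d)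
    (u w : Fin n → Fin ℓ) (hu : u ∈ multislice ℓ n κ) (hw : w ∈ multislice ℓ n κ)
    (hu1 : f u = 1) (hu0 : f (u ∘ Equiv.swap a b) = 0)
    (hw1 : f w = 1) (hw0 : f (w ∘ Equiv.swap c d) = 0) : False := by
  have triv : ∀ (u : Fin n → Fin ℓ) a b, u a = u b → u ∘ Equiv.swap a b = u := by
    intro u a b h
    ext1 x
    simp only [Function.comp]
    by_cases h1 : x = a
    · rw [h1, Equiv.swap_apply_left, h]
    by_cases h2 : x = b
    · rw [h2, Equiv.swap_apply_right, h]
    rw [Equiv.swap_apply_of_ne_of_ne h1 h2]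
  have hab : u a ≠ u b := fun h => by rw [triv u a b h, hu1] at hu0; norm_num at hu0
  have hcd : w c ≠ w d := fun h => by rw [triv w c d h, hw1] at hw0; norm_num at hw0
  have hcd' : c ≠ d := fun h => hcd (by rw [h])
  obtain ⟨p, hpa, hpb, hp⟩ := find_colour hκ hu a b hab (w c)
  set u1 := u ∘ Equiv.swap c p with hu1d
  have hu1M : u1 ∈ multislice ℓ n κ := (mem_swap _).2 hu
  have u1a : u1 a = u a := by
    simp [hu1d, Equiv.swap_apply_of_ne_of_ne hac hpa.symm]
  have u1b : u1 b = u b := by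
    simp [hu1d, Equiv.swap_apply_of_ne_of_ne hbc hpb.symm]
  have u1c : u1 c = w c := by simp [hu1d, hp]
  obtain ⟨q, hqa, hqb, hq⟩ := find_colour hκ hu1M a b (by rwa [u1a, u1b]) (w d)
  have hqc : q ≠ c := fun h => hcd (by rw [← u1c, ← hq, h])
  set v := u1 ∘ Equiv.swap d q with hvd
  have hvM : v ∈ multislice ℓ n κ := (mem_swap _).2 hu1M
  have va : v a = u a := by
    simp [hvd, Equiv.swap_apply_of_ne_of_ne had hqa.symm, u1a]
  have vb : v b = u b := by
    simp [hvd, Equiv.swap_apply_of_ne_of_ne hbd hqb.symm, u1b]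
  have vc : v c = w c := by
    simp [hvd, Equiv.swap_apply_of_ne_of_ne hcd' hqc.symm, u1c]
  have vd : v d = w d := by simp [hvd, hq]
  have D : ∀ (a b : Fin n) (u v : Fin n → Fin ℓ), u ∈ multislice ℓ n κ → v ∈ multislice ℓ n κ →
      u a = v a → u b = v b → f u - f (u ∘ Equiv.swap a b) = f v - f (v ∘ Equiv.swap a b) := by
    intro a b u v hu hv ha hb
    refine connect' ({a, b} : Set (Fin n)) (fun u => f u - f (u ∘ Equiv.swap a b)) ?_ u v hu hv ?_
    · intro u p q hp hq
      simp only [Set.mem_insert_iff, Set.mem_singleton_iff, not_or] at hp hq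
      have := sq p q a b hp.1 hp.2 hq.1 hq.2 u
      have e : (u ∘ ⇑(Equiv.swap p q)) ∘ ⇑(Equiv.swap a b)
        = u ∘ ⇑(Equiv.swap p q) ∘ ⇑(Equiv.swap a b) := rfl
      simp only [e]
      linarith
    · intro j hj
      rcases hj with rfl | rfl
      · exact ha
      · exact hb
  have d1 := D a b u v hu hvM va.symm vb.symm
  have d2 := D c d w v hw hvM vc.symm vd.symm
  have d3 := sq a b c d hac had hbc hbd v
  rcases hf v with h1 | h1 <;> rcases hf (v ∘ Equiv.swap a b) with h2 | h2 <;>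
  rcases hf (v ∘ Equiv.swap c d) with h3 | h3 <;>
  rcases hf (v ∘ Equiv.swap a b ∘ Equiv.swap c d) with h4 | h4 <;> linarith

theorem star_case {n : ℕ} (hn : 4 ≤ n) (I : Fin n → Fin n → Prop) (hr : ∀ a, I a a)
    (hs : ∀ a b, I a b → I b a) (ht : ∀ a b c, I a b → I b c → I a c)
    (hd : ∀ a b c d, a ≠ c → a ≠ d → b ≠ c → b ≠ d → ¬ I a b → I c d)
    (a b : Fin n) (hab : ¬ I a b) : ∃ j, ∀ p q, p ≠ j → q ≠ j → I p q := by
  have ex : ∀ s : Finset (Fin n), s.card ≤ 3 → ∃ x, x ∉ s := by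
    intro s hs
    by_contra h
    push Not at h
    have : s = univ := Finset.eq_univ_iff_forall.2 h
    rw [this, Finset.card_univ, Fintype.card_fin] at hs
    omega
  obtain ⟨c, hc⟩ := ex {a, b} (Finset.card_le_two.trans (by norm_num))
  obtain ⟨d, hd'⟩ := ex {a, b, c} Finset.card_le_three
  simp only [Finset.mem_insert, Finset.mem_singleton, not_or] at hc hd'
  have hcs : ∀ p, p ≠ a → p ≠ b → I p c := fun p h1 h2 =>
    hd a b p c h1.symm (Ne.symm hc.1) h2.symm (Ne.symm hc.2) hab
  by_cases hbc : I b c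
  · have : ∀ p, p ≠ a → I p c := fun p h1 => by
      by_cases h2 : p = b
      · rw [h2]; exact hbc
      · exact hcs p h1 h2
    exact ⟨a, fun p q hp hq => ht _ _ _ (this p hp) (hs _ _ (this q hq))⟩
  · have hba : b ≠ a := fun h => hab (by rw [h]; exact hr a)
    have hac : I a c := ht _ _ _ (hd b c a d hba (Ne.symm hd'.2.1) hc.1 (Ne.symm hd'.2.2) hbc)
      (hcs d hd'.1 hd'.2.1)
    have : ∀ p, p ≠ b → I p c := fun p h1 => by
      by_cases h2 : p = a
      · rw [h2]; exact hac
      · exact hcs p h2 h1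
    exact ⟨b, fun p q hp hq => ht _ _ _ (this p hp) (hs _ _ (this q hq))⟩

theorem count_colour {ℓ n : ℕ} (κ : Fin ℓ → ℕ) (j : Fin n) (i : Fin ℓ) :
    n * ((multislice ℓ n κ).filter fun u => u j = i).card = κ i * (multislice ℓ n κ).card := by
  have h1 : ∀ k : Fin n, ((multislice ℓ n κ).filter fun u => u k = i).card
      = ((multislice ℓ n κ).filter fun u => u j = i).card := fun k => by
    refine Finset.card_bij (fun u _ => u ∘ Equiv.swap j k) ?_ ?_ ?_
    · intro u hu
      rw [Finset.mem_filter] at hu ⊢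
      exact ⟨(mem_swap _).2 hu.1, by simpa using hu.2⟩
    · intro u _ v _ h
      exact (Equiv.swap j k).surjective.injective_comp_right h
    · intro u hu
      rw [Finset.mem_filter] at hu
      refine ⟨u ∘ Equiv.swap j k, ?_, ?_⟩
      · rw [Finset.mem_filter]
        exact ⟨(mem_swap _).2 hu.1, by simpa using hu.2⟩
      · ext1 x; simp
  have h2 : ∑ k : Fin n, ((multislice ℓ n κ).filter fun u => u k = i).card
      = ∑ u ∈ multislice ℓ n κ, (Finset.univ.filter fun k => u k = i).card := by
    simp only [Finset.card_filter]
    exact Finset.sum_comm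
  have h3 : ∑ u ∈ multislice ℓ n κ, (Finset.univ.filter fun k => u k = i).card
      = ∑ u ∈ multislice ℓ n κ, κ i :=
    Finset.sum_congr rfl fun u hu => (Finset.mem_filter.1 hu).2 i
  rw [h3] at h2
  simp only [h1, Finset.sum_const, smul_eq_mul, Finset.card_univ, Fintype.card_fin] at h2
  rw [h2, mul_comm]

/-- If the edge-isoperimetric bound is attained by a set `A` of volume `α ∈ (0,1)` (and all
`κ_i ≥ 2`), then `A = {u : u_j ∈ S}` for some coordinate `j` and some set of colours `S` with
`∑_{i∈S} κ_i = αn`. -/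
theorem multislice_isoperimetry_extremal (ℓ n : ℕ) (hℓ : 2 ≤ ℓ) (hn : 4 ≤ n)
    (κ : Fin ℓ → ℕ) (hκ : ∀ i, 2 ≤ κ i) (hsum : ∑ i, κ i = n)
    (A : Finset (Fin n → Fin ℓ)) (hA : A ⊆ multislice ℓ n κ) (hne : A.Nonempty)
    (α : ℝ) (hα : msVol ℓ n κ A = α) (hα0 : 0 < α) (hα1 : α < 1)
    (heq : msExpansion ℓ n A = 2 * (1 - α) / ((n : ℝ) - 1)) :
    ∃ (j : Fin n) (S : Finset (Fin ℓ)),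
      (∑ i ∈ S, (κ i : ℝ)) = α * n ∧
      A = (multislice ℓ n κ).filter fun u => u j ∈ S := by
  set M := multislice ℓ n κ with hM
  have hApos : (0:ℝ) < A.card := by exact_mod_cast hne.card_pos
  have hMpos : (0:ℝ) < M.card := by exact_mod_cast (hne.mono hA).card_pos
  have hαM : α * M.card = A.card := by
    rw [← hα, msVol, div_mul_cancel₀]
    exact hMpos.ne'
  have hnR : (4:ℝ) ≤ n := by exact_mod_cast hn
  let f : (Fin n → Fin ℓ) → ℝ := fun u => if u ∈ A then 1 else 0
  let m : (Fin n → Fin ℓ) → ℝ := fun u => if u ∈ M then 1 else 0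
  let g : (Fin n → Fin ℓ) → ℝ := fun u => f u - α * m u
  have hf : ∀ u, f u = 0 ∨ f u = 1 := fun u => by
    by_cases h : u ∈ A <;> simp [f, h]
  have hfA : ∀ u, f u = 1 ↔ u ∈ A := fun u => by
    by_cases h : u ∈ A <;> simp [f, h]
  have hm : ∀ u (a b : Fin n), m (u ∘ Equiv.swap a b) = m u := fun u a b => by
    simp only [m, hM, mem_swap]
  have hfm : ∀ u, f u * m u = f u := fun u => by
    by_cases h : u ∈ A
    · simp [f, m, h, hA h]
    · simp [f, h]
  have sf : ∑ u, f u = A.card := by simp [f]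
  have sm : ∑ u, m u = M.card := by simp [m]
  have hLap : ∀ u, Lap g u = Lap f u := fun u => by
    simp only [Lap, g, hm]
    refine Finset.sum_congr rfl fun a _ => Finset.sum_congr rfl fun b _ => ?_
    ring
  have hmL : ∑ u, m u * Lap f u = 0 := by
    rw [← Lap_symm]
    simp [Lap, hm]
  have hfL : ∑ u, f u * Lap f u = ∑ u ∈ A, ((Finset.univ.filter fun q : Fin n × Fin n =>
      q.1 ≠ q.2 ∧ (u ∘ Equiv.swap q.1 q.2) ∉ A).card : ℝ) := by
    have : ∀ u, f u * Lap f u = if u ∈ A then Lap f u else 0 := fun u => by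
      simp [f]
    simp only [this]
    rw [Finset.sum_ite_mem, Finset.univ_inter]
    refine Finset.sum_congr rfl fun u hu => ?_
    rw [Finset.card_filter, Lap, ← Finset.sum_product', Finset.univ_product_univ]
    push_cast
    refine Finset.sum_congr rfl fun q _ => ?_
    by_cases hq : q.1 = q.2
    · simp [hq]
    · by_cases hx : u ∘ Equiv.swap q.1 q.2 ∈ A <;> simp [f, hu, hq, hx]
  have hN : ∑ u, f u * Lap f u = 2 * n * (1 - α) * A.card := by
    rw [hfL]
    have h1 : (n:ℝ) - 1 ≠ 0 := by linarith
    have h2 : (n:ℝ) ≠ 0 := by linarith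
    rw [msExpansion, div_eq_div_iff (by positivity) h1] at heq
    apply mul_right_cancel₀ h1
    rw [heq]; ring
  have hgg : ∑ u, g u * g u = (1 - α) * A.card := by
    have : ∀ u, g u * g u = (1 - 2 * α) * f u + α ^ 2 * m u := fun u => by
      have e1 : f u * f u = f u := by rcases hf u with h | h <;> rw [h] <;> norm_num
      have e2 : m u * m u = m u := by by_cases h : u ∈ M <;> simp [m, h]
      calc g u * g u = f u * f u - 2 * α * (f u * m u) + α ^ 2 * (m u * m u) := by
            simp only [g]; ring
        _ = _ := by rw [e1, e2, hfm]; ring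
    simp only [this, Finset.sum_add_distrib, ← Finset.mul_sum, sf, sm, ← hαM]
    ring
  have hgL : ∑ u, g u * Lap g u = 2 * Fintype.card (Fin n) * ∑ u, g u * g u := by
    rw [hgg, Fintype.card_fin]
    simp only [hLap]
    have : ∀ u, g u * Lap f u = f u * Lap f u - α * (m u * Lap f u) := fun u => by
      simp only [g]; ring
    simp only [this, Finset.sum_sub_distrib, ← Finset.mul_sum, hmL, hN]
    ring
  have hker : ∀ v : (Fin n → Fin ℓ) → ℝ, (∀ u a b, v (u ∘ Equiv.swap a b) = v u) →
      ∑ u, v u * g u = 0 := by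
    intro v hv
    obtain ⟨u0, hu0⟩ := hne.mono hA
    have : ∀ u, v u * g u = v u0 * g u := fun u => by
      by_cases h : u ∈ M
      · rw [connect' ∅ v (fun u p q _ _ => hv u p q) u u0 h hu0 (by simp)]
      · have h' : u ∉ A := fun h' => h (hA h')
        simp [g, f, m, h, h']
    simp only [this, ← Finset.mul_sum, g, Finset.sum_sub_distrib, sf, sm, hαM]
    simp
  haveI : Nonempty (Fin n) := ⟨⟨0, by omega⟩⟩
  have hD := equality_case g hker hgL
  have sq : ∀ a b c d : Fin n, a ≠ c → a ≠ d → b ≠ c → b ≠ d → ∀ u, f u - f (u ∘ Equiv.swap a b)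
      = f (u ∘ Equiv.swap c d) - f (u ∘ Equiv.swap a b ∘ Equiv.swap c d) := by
    intro a b c d h1 h2 h3 h4 u
    have := Disj_zero g hD a b c d h1 h2 h3 h4 u
    simp only [g, ← Function.comp_assoc, hm] at this
    rw [← Function.comp_assoc]
    linarith
  let I : Fin n → Fin n → Prop := fun a b => ∀ u, f (u ∘ Equiv.swap a b) = f u
  have invol : ∀ (u : Fin n → Fin ℓ) a b, (u ∘ ⇑(Equiv.swap a b)) ∘ ⇑(Equiv.swap a b) = u :=
    fun u a b => by ext1 x; simp
  have act : ∀ a b, ¬ I a b → ∃ u ∈ M, f u = 1 ∧ f (u ∘ Equiv.swap a b) = 0 := by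
    intro a b h
    simp only [I, not_forall] at h
    obtain ⟨u, hu⟩ := h
    rcases hf u with h1 | h1 <;> rcases hf (u ∘ Equiv.swap a b) with h2 | h2
    · exact absurd (h2.trans h1.symm) hu
    · exact ⟨u ∘ Equiv.swap a b, hA ((hfA _).1 h2), h2, by rw [invol]; exact h1⟩
    · exact ⟨u, hA ((hfA _).1 h1), h1, h2⟩
    · exact absurd (h2.trans h1.symm) hu
  have hIr : ∀ a, I a a := fun a u => by simp
  have hIs : ∀ a b, I a b → I b a := fun a b h u => by rw [Equiv.swap_comm]; exact h u
  have hIt : ∀ a b c, I a b → I b c → I a c := by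
    intro a b c h1 h2
    by_cases hac : a = c
    · rw [hac]; exact hIr c
    by_cases hab : a = b
    · rw [hab]; exact h2
    intro u
    have e : u ∘ Equiv.swap a c
        = ((u ∘ Equiv.swap b c) ∘ Equiv.swap a b) ∘ Equiv.swap b c := by
      rw [Equiv.swap_comm a c, ← Equiv.swap_mul_swap_mul_swap hab hac]
      rfl
    rw [e, h2, h1, h2]
  have hId : ∀ a b c d, a ≠ c → a ≠ d → b ≠ c → b ≠ d → ¬ I a b → I c d := by
    intro a b c d h1 h2 h3 h4 hab
    by_contra hcd
    obtain ⟨u, hu, hu1, hu0⟩ := act a b hab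
    obtain ⟨w, hw, hw1, hw0⟩ := act c d hcd
    exact no_disj hκ f hf sq a b c d h1 h2 h3 h4 u w hu hw hu1 hu0 hw1 hw0
  have hex : ∃ a b, ¬ I a b := by
    by_contra hcon
    push Not at hcon
    obtain ⟨u0, hu0⟩ := hne
    have hMA : M ⊆ A := fun u hu => by
      rw [← hfA, connect' ∅ f (fun u p q _ _ => hcon p q u) u u0 hu (hA hu0) (by simp), hfA]
      exact hu0
    have : (M.card : ℝ) ≤ A.card := by exact_mod_cast Finset.card_le_card hMA
    nlinarith
  obtain ⟨a, b, hab⟩ := hex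
  obtain ⟨j, hj⟩ := star_case hn I hIr hIs hIt hId a b hab
  have hdep : ∀ u ∈ M, ∀ v ∈ M, u j = v j → f u = f v := fun u hu v hv h =>
    connect' {j} f (fun u p q hp hq => hj p q hp hq u) u v hu hv (by simpa using h)
  have hAeq : A = M.filter fun u => u j ∈ A.image fun u => u j := by
    ext u
    simp only [Finset.mem_filter, Finset.mem_image]
    constructor
    · intro hu; exact ⟨hA hu, u, hu, rfl⟩
    · rintro ⟨hu, v, hv, hvu⟩
      rw [← hfA, hdep u hu v (hA hv) hvu.symm, hfA]
      exact hv
  refine ⟨j, A.image fun u => u j, ?_, hAeq⟩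
  have hcard : A.card = ∑ i ∈ A.image fun u => u j, (M.filter fun u => u j = i).card := by
    conv_lhs => rw [hAeq]
    rw [Finset.card_eq_sum_card_fiberwise (f := fun u => u j) (t := A.image fun u => u j)]
    · refine Finset.sum_congr rfl fun i hi => ?_
      congr 1
      ext u
      simp only [Finset.mem_filter]
      constructor
      · rintro ⟨⟨h1, _⟩, h2⟩; exact ⟨h1, h2⟩
      · rintro ⟨h1, h2⟩; exact ⟨⟨h1, by rw [h2]; exact hi⟩, h2⟩
    · intro u hu
      exact (Finset.mem_filter.1 hu).2
  have hcount : n * A.card = (∑ i ∈ A.image fun u => u j, κ i) * M.card := by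
    rw [hcard, Finset.mul_sum, Finset.sum_mul]
    exact Finset.sum_congr rfl fun i _ => count_colour κ j i
  have hcountR : (n:ℝ) * A.card = (∑ i ∈ A.image fun u => u j, (κ i : ℝ)) * M.card := by
    exact_mod_cast hcount
  apply mul_right_cancel₀ hMpos.ne'
  rw [← hcountR, ← hαM]
  ring
end
end

section
/- Let M_κ be a multislice on n ≥ 4 points and let A ⊆ M_κ be nonempty with vol(A) = α. Then Φ(A) ≥ 2(1−α)/(n−1) + (2(n−2)/(n(n−1)))·‖(1_A)^{>1}‖²/α, where 1_A is the indicator function of A. -/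
open Finset

noncomputable section

section abstractPart

variable {β E : Type*} [Fintype β] [DecidableEq β] [NormedAddCommGroup E] [InnerProductSpace ℝ E]

/-- Permutations supported on `T`. -/
def permsOn (T : Finset β) : Finset (Equiv.Perm β) :=
  Finset.univ.filter fun σ => ∀ x, x ∉ T → σ x = x

/-- Unnormalized average over permutations supported on `T`. -/
def sumOn (ρ : Equiv.Perm β →* (E →ₗ[ℝ] E)) (T : Finset β) : E →ₗ[ℝ] E :=
  ∑ σ ∈ permsOn T, ρ σ

/-- Sum over ordered pairs of (possibly trivial) transpositions in `T`. -/
def swapsOn (ρ : Equiv.Perm β →* (E →ₗ[ℝ] E)) (T : Finset β) : E →ₗ[ℝ] E :=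
  ∑ a ∈ T, ∑ b ∈ T, ρ (Equiv.swap a b)

lemma mem_permsOn {T : Finset β} {σ : Equiv.Perm β} :
    σ ∈ permsOn T ↔ ∀ x, x ∉ T → σ x = x := by simp [permsOn]

lemma permsOn_mul {T : Finset β} {σ τ : Equiv.Perm β} (h : σ ∈ permsOn T) (k : τ ∈ permsOn T) :
    σ * τ ∈ permsOn T := by
  rw [mem_permsOn] at *
  intro x hx
  rw [Equiv.Perm.mul_apply, k x hx, h x hx]

lemma permsOn_inv {T : Finset β} {σ : Equiv.Perm β} (h : σ ∈ permsOn T) :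
    σ⁻¹ ∈ permsOn T := by
  rw [mem_permsOn] at *
  intro x hx
  rw [Equiv.Perm.inv_eq_iff_eq, h x hx]

lemma permsOn_swap {T : Finset β} {a b : β} (ha : a ∈ T) (hb : b ∈ T) :
    Equiv.swap a b ∈ permsOn T := by
  rw [mem_permsOn]
  intro x hx
  exact Equiv.swap_apply_of_ne_of_ne (by rintro rfl; exact hx ha) (by rintro rfl; exact hx hb)

lemma permsOn_mono {S T : Finset β} (h : S ⊆ T) : permsOn S ⊆ permsOn T := by
  intro σ hσ
  rw [mem_permsOn] at *
  exact fun x hx => hσ x fun hxs => hx (h hxs)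

lemma permsOn_mem_iff {T : Finset β} {σ : Equiv.Perm β} (h : σ ∈ permsOn T) (x : β) :
    σ x ∈ T ↔ x ∈ T := by
  constructor
  · intro hx
    by_contra hn
    rw [mem_permsOn.1 h x hn] at hx
    exact hn hx
  · intro hx
    by_contra hn
    have := mem_permsOn.1 h _ hn
    rw [σ.injective this] at hn
    exact hn hx

variable (ρ : Equiv.Perm β →* (E →ₗ[ℝ] E))

lemma sumOn_apply (T : Finset β) (x : E) : sumOn ρ T x = ∑ σ ∈ permsOn T, ρ σ x := by
  simp [sumOn]

lemma swapsOn_apply (T : Finset β) (x : E) :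
    swapsOn ρ T x = ∑ a ∈ T, ∑ b ∈ T, ρ (Equiv.swap a b) x := by
  simp [swapsOn]

lemma act_sumOn {T : Finset β} {σ : Equiv.Perm β} (h : σ ∈ permsOn T) (x : E) :
    ρ σ (sumOn ρ T x) = sumOn ρ T x := by
  rw [sumOn_apply, map_sum]
  refine Finset.sum_bij' (fun τ _ => σ * τ) (fun τ _ => σ⁻¹ * τ) ?_ ?_ ?_ ?_ ?_
  · exact fun τ k => permsOn_mul h k
  · exact fun τ k => permsOn_mul (permsOn_inv h) k
  · simp
  · simp
  · intro τ _
    rw [map_mul]; rfl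

lemma coset_sumOn {S : Finset β} {j : β} (hj : j ∉ S) (x : E) :
    ∑ m ∈ insert j S, ρ (Equiv.swap j m) (sumOn ρ S x) = sumOn ρ (insert j S) x := by
  simp only [sumOn_apply, map_sum]
  rw [← Finset.sum_product']
  refine Finset.sum_bij' (fun q _ => Equiv.swap j q.1 * q.2)
    (fun τ _ => (τ j, Equiv.swap j (τ j) * τ)) ?_ ?_ ?_ ?_ ?_
  · rintro ⟨m, σ⟩ h
    rw [Finset.mem_product] at h
    exact permsOn_mul (permsOn_swap (Finset.mem_insert_self _ _) h.1)
      (permsOn_mono (Finset.subset_insert _ _) h.2)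
  · intro τ h
    rw [Finset.mem_product]
    refine ⟨(permsOn_mem_iff h j).2 (Finset.mem_insert_self _ _), ?_⟩
    rw [mem_permsOn]
    intro y hy
    by_cases hyj : y = j
    · subst hyj; simp
    · have h1 : y ∉ insert j S := by simp [hyj, hy]
      have h2 := mem_permsOn.1 h y h1
      simp only [Equiv.Perm.mul_apply]
      rw [h2]
      refine Equiv.swap_apply_of_ne_of_ne hyj ?_
      intro h3
      exact hyj (τ.injective (h2.trans h3))
  · rintro ⟨m, σ⟩ h
    rw [Finset.mem_product] at h
    have := mem_permsOn.1 h.2 j hj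
    simp only at this
    simp [this, ← mul_assoc]
  · intro τ h
    simp [← mul_assoc]
  · rintro ⟨m, σ⟩ h
    rw [map_mul]; rfl

lemma swapsOn_comm {T : Finset β} {σ : Equiv.Perm β} (h : σ ∈ permsOn T) (x : E) :
    swapsOn ρ T (ρ σ x) = ρ σ (swapsOn ρ T x) := by
  simp only [swapsOn_apply, map_sum]
  have key : ∀ F : β → E, ∑ a ∈ T, F a = ∑ a ∈ T, F (σ a) := by
    intro F
    symm
    refine Finset.sum_bij' (fun a _ => σ a) (fun a _ => σ⁻¹ a) ?_ ?_ ?_ ?_ ?_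
    · exact fun a ha => (permsOn_mem_iff h a).2 ha
    · exact fun a ha => (permsOn_mem_iff (permsOn_inv h) a).2 ha
    · simp
    · simp
    · simp
  rw [key]
  refine Finset.sum_congr rfl fun a _ => ?_
  rw [key]
  refine Finset.sum_congr rfl fun b _ => ?_
  rw [← Module.End.mul_apply, ← Module.End.mul_apply, ← map_mul, ← map_mul]
  congr 2
  exact (Equiv.mul_swap_eq_swap_mul σ a b).symm

lemma swapsOn_sumOn_comm {S T : Finset β} (h : S ⊆ T) (x : E) :
    swapsOn ρ T (sumOn ρ S x) = sumOn ρ S (swapsOn ρ T x) := by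
  simp only [sumOn_apply, map_sum]
  exact Finset.sum_congr rfl fun σ hσ => swapsOn_comm ρ (permsOn_mono h hσ) x

lemma swapsOn_symm
    (hρ : ∀ σ x y, inner ℝ (ρ σ x) y = inner ℝ x (ρ σ⁻¹ y))
    (T : Finset β) (x y : E) :
    inner ℝ (swapsOn ρ T x) y = inner ℝ x (swapsOn ρ T y) := by
  simp only [swapsOn_apply, sum_inner, inner_sum]
  refine Finset.sum_congr rfl fun a _ => Finset.sum_congr rfl fun b _ => ?_
  rw [hρ, Equiv.swap_inv]

lemma sumOn_inner
    (hρ : ∀ σ x y, inner ℝ (ρ σ x) y = inner ℝ x (ρ σ⁻¹ y))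
    (T : Finset β) (x : E) :
    inner ℝ (sumOn ρ T x) (sumOn ρ T x) = ((permsOn T).card : ℝ) * inner ℝ x (sumOn ρ T x) := by
  conv_lhs => enter [2]; rw [sumOn_apply]
  rw [sum_inner]
  rw [Finset.sum_congr rfl (g := fun _ => inner ℝ x (sumOn ρ T x))]
  · simp
  · intro σ hσ
    rw [hρ, act_sumOn ρ (permsOn_inv hσ)]

lemma swapsOn_pair {S T : Finset β} {j k : β} (hjk : j ≠ k) (hj : j ∉ S) (hk : k ∉ S)
    (hT : T = insert j (insert k S)) (x : E)
    (hx : ∀ a ∈ S, ∀ b ∈ S, ρ (Equiv.swap a b) x = x)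
    (h1 : ∑ m ∈ S, ρ (Equiv.swap j m) x = -x)
    (h2 : ∑ m ∈ S, ρ (Equiv.swap k m) x = -x) :
    swapsOn ρ T x = (((T.card : ℝ) - 2) ^ 2 - 2) • x + (2 : ℝ) • ρ (Equiv.swap j k) x := by
  have hc : (T.card : ℝ) = S.card + 2 := by
    rw [hT, Finset.card_insert_of_notMem (by simp [hjk, hj]), Finset.card_insert_of_notMem hk]
    push_cast; ring
  have hj' : j ∉ insert k S := by simp [hjk, hj]
  rw [swapsOn_apply, hc, hT]
  have h1' : ∑ m ∈ S, ρ (Equiv.swap m j) x = -x := by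
    rw [← h1]; exact Finset.sum_congr rfl fun m _ => by rw [Equiv.swap_comm]
  have h2' : ∑ m ∈ S, ρ (Equiv.swap m k) x = -x := by
    rw [← h2]; exact Finset.sum_congr rfl fun m _ => by rw [Equiv.swap_comm]
  have h3 : ∑ a ∈ S, ∑ b ∈ S, ρ (Equiv.swap a b) x = ((S.card : ℝ) ^ 2) • x := by
    rw [Finset.sum_congr rfl fun a ha => Finset.sum_congr rfl fun b hb => hx a ha b hb]
    simp only [Finset.sum_const]
    rw [← Nat.cast_smul_eq_nsmul ℝ, ← Nat.cast_smul_eq_nsmul ℝ, smul_smul, sq]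
  simp only [Finset.sum_insert hj', Finset.sum_insert hk, Finset.sum_add_distrib, h1, h2, h1', h2',
    h3, Equiv.swap_self]
  rw [Equiv.swap_comm k j]
  have : ρ (Equiv.refl β) x = x := by
    have := map_one ρ
    rw [show (Equiv.refl β) = 1 from rfl, this]; rfl
  rw [this]
  module

/-- Per-pair vanishing for an eigenvector. -/
lemma eigen_pair
    (hρ : ∀ σ x y, inner ℝ (ρ σ x) y = inner ℝ x (ρ σ⁻¹ y))
    {T : Finset β} {j k : β} (hjk : j ≠ k) (hj : j ∈ T) (hk : k ∈ T) (g : E)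
    (hU : ∀ j ∈ T, sumOn ρ (T.erase j) g = 0) (μ : ℝ)
    (hμ : swapsOn ρ T g = μ • g) (hlt : (T.card : ℝ) ^ 2 - 4 * (T.card - 1) < μ) :
    sumOn ρ ((T.erase j).erase k) g = 0 := by
  set S := (T.erase j).erase k with hS
  have hkS : k ∉ S := by simp [hS]
  have hjS : j ∉ S := by simp [hS]
  have eT : T = insert j (insert k S) := by
    rw [hS, Finset.insert_erase (by simp [hk, hjk.symm]), Finset.insert_erase hj]
  have e1 : insert j S = T.erase k := by
    rw [hS, Finset.erase_right_comm, Finset.insert_erase (by simp [hj, hjk])]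
  have e2 : insert k S = T.erase j := by
    rw [hS, Finset.insert_erase (by simp [hk, hjk.symm])]
  set x := sumOn ρ S g with hxdef
  have c1 := coset_sumOn ρ hjS g
  have c2 := coset_sumOn ρ hkS g
  have hone : ρ (Equiv.refl β) x = x := by
    have := map_one ρ
    rw [show (Equiv.refl β) = 1 from rfl, this]; rfl
  rw [e1, hU k hk, ← e1, Finset.sum_insert hjS, Equiv.swap_self, hone] at c1
  rw [e2, hU j hj, ← e2, Finset.sum_insert hkS, Equiv.swap_self, hone] at c2
  have c1' := eq_neg_of_add_eq_zero_right c1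
  have c2' := eq_neg_of_add_eq_zero_right c2
  have hx : ∀ a ∈ S, ∀ b ∈ S, ρ (Equiv.swap a b) x = x := fun a ha b hb =>
    act_sumOn ρ (permsOn_swap ha hb) g
  have A := swapsOn_pair ρ hjk hjS hkS eT x hx c1' c2'
  have B := swapsOn_comm ρ (permsOn_swap hj hk) x
  set y := ρ (Equiv.swap j k) x with hy
  have hyy : ρ (Equiv.swap j k) y = x := by
    rw [hy, ← Module.End.mul_apply, ← map_mul, Equiv.swap_mul_self, map_one]; rfl
  rw [A, map_add, map_smul, map_smul, hyy, ← hy] at B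
  have I1 := swapsOn_symm ρ hρ T g x
  have I2 := swapsOn_symm ρ hρ T g y
  rw [hμ, A, real_inner_smul_left, inner_add_right, real_inner_smul_right,
    real_inner_smul_right] at I1
  rw [hμ, B, real_inner_smul_left, inner_add_right, real_inner_smul_right,
    real_inner_smul_right] at I2
  have P : (μ - ((T.card : ℝ) ^ 2 - 4 * (T.card - 1))) * (inner ℝ g x + inner ℝ g y) = 0 := by
    linear_combination I1 + I2
  have Q : (μ - ((T.card : ℝ) ^ 2 - 4 * T.card)) * (inner ℝ g x - inner ℝ g y) = 0 := by
    linear_combination I1 - I2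
  have P' := (mul_eq_zero.1 P).resolve_left (by linarith)
  have Q' := (mul_eq_zero.1 Q).resolve_left (by linarith)
  have Z : inner ℝ g x = 0 := by linarith
  have := sumOn_inner ρ hρ S g
  rw [← hxdef, Z, mul_zero] at this
  exact inner_self_eq_zero.1 this

lemma symm_bound {F : Type*} [NormedAddCommGroup F] [InnerProductSpace ℝ F]
    [FiniteDimensional ℝ F] (K : F →ₗ[ℝ] F) (hK : K.IsSymmetric) (c : ℝ)
    (h : ∀ v μ, v ≠ 0 → K v = μ • v → μ ≤ c) (g : F) :
    inner ℝ (K g) g ≤ c * inner ℝ g g := by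
  have b := hK.eigenvectorBasis rfl
  set b := hK.eigenvectorBasis rfl with hb
  rw [← b.sum_inner_mul_inner (K g) g, ← b.sum_inner_mul_inner g g, Finset.mul_sum]
  refine Finset.sum_le_sum fun i _ => ?_
  have e : K (b i) = (hK.eigenvalues rfl i) • b i := by
    exact hK.apply_eigenvectorBasis rfl i
  have := h (b i) _ (b.orthonormal.ne_zero i) e
  rw [hK g (b i), e, real_inner_smul_right, mul_assoc]
  refine mul_le_mul_of_nonneg_right this ?_
  rw [real_inner_comm]
  exact mul_self_nonneg _

lemma sum_swapsOn_erase (T : Finset β) (x : E) :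
    ∑ j ∈ T, swapsOn ρ (T.erase j) x =
      ((T.card : ℝ) - 2) • swapsOn ρ T x + (T.card : ℝ) • x := by
  have hone : ∀ a, ρ (Equiv.swap a a) x = x := by
    intro a
    have := map_one ρ
    rw [Equiv.swap_self, show (Equiv.refl β) = 1 from rfl, this]; rfl
  have e : ∀ j ∈ T, swapsOn ρ (T.erase j) x = swapsOn ρ T x
      - (2 : ℝ) • (∑ b ∈ T, ρ (Equiv.swap j b) x) + x := by
    intro j hj
    have q : ∀ F : β → E, ∑ a ∈ T.erase j, F a = ∑ a ∈ T, F a - F j := fun F =>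
      by rw [← Finset.add_sum_erase T F hj]; abel
    rw [swapsOn_apply, q]
    simp only [q]
    rw [Finset.sum_sub_distrib, ← swapsOn_apply, hone]
    rw [Finset.sum_congr rfl fun a _ => by rw [Equiv.swap_comm a j]]
    module
  rw [Finset.sum_congr rfl e, Finset.sum_add_distrib, Finset.sum_sub_distrib, ← Finset.smul_sum,
    ← swapsOn_apply]
  simp only [Finset.sum_const, ← Nat.cast_smul_eq_nsmul ℝ]
  module

theorem spectral_main
    (hρ : ∀ σ x y, inner ℝ (ρ σ x) y = inner ℝ x (ρ σ⁻¹ y))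
    [FiniteDimensional ℝ E] (N : ℕ) : ∀ (T : Finset β), T.card = N → ∀ g : E,
    (∀ j ∈ T, sumOn ρ (T.erase j) g = 0) →
    inner ℝ (swapsOn ρ T g) g ≤ ((N : ℝ) ^ 2 - 4 * (N - 1)) * inner ℝ g g := by
  induction N with
  | zero =>
    intro T hT g _
    rw [Finset.card_eq_zero] at hT
    subst hT
    simp [swapsOn]
  | succ N ih =>
    intro T hT g hg
    have hcard : (T.card : ℝ) = N + 1 := by rw [hT]; push_cast; ring
    let U : Submodule ℝ E := ⨅ j ∈ T, LinearMap.ker (sumOn ρ (T.erase j))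
    have memU : ∀ x, x ∈ U ↔ ∀ j ∈ T, sumOn ρ (T.erase j) x = 0 := by
      intro x; simp [U, Submodule.mem_iInf]
    have inv : ∀ x ∈ U, swapsOn ρ T x ∈ U := by
      intro x hx
      rw [memU] at *
      intro j hj
      rw [← swapsOn_sumOn_comm ρ (Finset.erase_subset _ _), hx j hj, map_zero]
    have symT : (swapsOn ρ T).IsSymmetric := fun x y => swapsOn_symm ρ hρ T x y
    have := symm_bound ((swapsOn ρ T).restrict inv) (symT.restrict_invariant inv)
      (((N + 1 : ℕ) : ℝ) ^ 2 - 4 * ((N + 1 : ℕ) - 1)) ?_ ⟨g, (memU g).2 hg⟩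
    · exact this
    rintro ⟨v, hv⟩ μ hv0 hμ
    have hv0' : v ≠ 0 := by simpa using hv0
    have hμ' : swapsOn ρ T v = μ • v := congrArg Subtype.val hμ
    rw [memU] at hv
    by_contra hlt
    push Not at hlt
    have van : ∀ j ∈ T, ∀ k ∈ T.erase j, sumOn ρ ((T.erase j).erase k) v = 0 := by
      intro j hj k hk
      rw [Finset.mem_erase] at hk
      exact eigen_pair ρ hρ hk.1.symm hj hk.2 v hv μ hμ' (by rw [hT]; exact hlt)
    have hpos : 0 < inner ℝ v v := real_inner_self_pos.2 hv0'
    have S : ∑ j ∈ T, inner ℝ (swapsOn ρ (T.erase j) v) v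
        ≤ ∑ j ∈ T, ((N : ℝ) ^ 2 - 4 * (N - 1)) * inner ℝ v v := by
      refine Finset.sum_le_sum fun j hj => ih _ ?_ v (van j hj)
      rw [Finset.card_erase_of_mem hj, hT]; rfl
    rw [← sum_inner, sum_swapsOn_erase, hμ', Finset.sum_const, nsmul_eq_mul, hcard, inner_add_left,
      real_inner_smul_left, real_inner_smul_left, real_inner_smul_left] at S
    push_cast at hlt
    have S' : ((N : ℝ) + 1 - 2) * μ + (N + 1) ≤ (N + 1) * ((N : ℝ) ^ 2 - 4 * (N - 1)) := by
      refine le_of_mul_le_mul_right ?_ hpos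
      linarith
    have triv : ∀ R : Finset β, R.card ≤ 1 → sumOn ρ R v = v := by
      intro R hR
      rw [sumOn_apply]
      have : permsOn R = {1} := by
        ext σ
        rw [mem_permsOn, Finset.mem_singleton]
        refine ⟨fun h => ?_, fun h => by simp [h]⟩
        have h' : σ ∈ permsOn R := mem_permsOn.2 h
        ext y
        by_cases hy : y ∈ R
        · exact Finset.card_le_one.1 hR _ ((permsOn_mem_iff h' y).2 hy) _ hy
        · exact h y hy
      rw [this]; simp
    have hN : 2 ≤ N := by
      by_contra hN
      push Not at hN
      obtain ⟨j, hj⟩ : T.Nonempty := by rw [← Finset.card_pos]; omega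
      have := hv j hj
      rw [triv _ (by rw [Finset.card_erase_of_mem hj]; omega)] at this
      exact hv0' this
    have hN' : (2 : ℝ) ≤ N := by exact_mod_cast hN
    nlinarith

end abstractPart

section concretePart

/-- Coordinate permutation action on functions on `[ℓ]^n`. -/
def coordAct (ℓ n : ℕ) : Equiv.Perm (Fin n) →*
    (EuclideanSpace ℝ (Fin n → Fin ℓ) →ₗ[ℝ] EuclideanSpace ℝ (Fin n → Fin ℓ)) where
  toFun σ :=
    { toFun := fun g => WithLp.toLp 2 (fun u => g (u ∘ σ))
      map_add' := fun x y => by ext u; simp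
      map_smul' := fun c x => by ext u; simp }
  map_one' := by ext g u; simp
  map_mul' σ τ := by ext g u; simp [Function.comp_assoc]

lemma coordAct_apply {ℓ n : ℕ} (σ : Equiv.Perm (Fin n)) (g : EuclideanSpace ℝ (Fin n → Fin ℓ))
    (u : Fin n → Fin ℓ) : coordAct ℓ n σ g u = g (u ∘ σ) := rfl

lemma sum_comp_perm {ℓ n : ℕ} (σ : Equiv.Perm (Fin n)) (F : (Fin n → Fin ℓ) → ℝ) :
    ∑ u, F (u ∘ σ) = ∑ u, F u :=
  Equiv.sum_comp (Equiv.arrowCongr σ.symm (Equiv.refl (Fin ℓ))) F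

lemma coordAct_adj {ℓ n : ℕ} (σ : Equiv.Perm (Fin n)) (x y : EuclideanSpace ℝ (Fin n → Fin ℓ)) :
    inner ℝ (coordAct ℓ n σ x) y = inner ℝ x (coordAct ℓ n σ⁻¹ y) := by
  simp only [PiLp.inner_apply, coordAct_apply]
  rw [← sum_comp_perm σ (fun u => inner ℝ (x u) (y (u ∘ ⇑σ⁻¹)))]
  refine Finset.sum_congr rfl fun u _ => ?_
  have e : (u ∘ ⇑σ) ∘ ⇑σ⁻¹ = u := by ext1 i; simp
  rw [e]

lemma concrete_bound {ℓ n : ℕ} (g : (Fin n → Fin ℓ) → ℝ)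
    (hg : ∀ j u, ∑ σ ∈ permsOn (Finset.univ.erase j), g (u ∘ σ) = 0) :
    ∑ u, g u * ∑ a, ∑ b, g (u ∘ Equiv.swap a b) ≤
      ((n : ℝ) ^ 2 - 4 * (n - 1)) * ∑ u, g u ^ 2 := by
  have := spectral_main (coordAct ℓ n) coordAct_adj n Finset.univ (by simp)
    (WithLp.toLp 2 g) ?_
  · rw [PiLp.inner_apply, PiLp.inner_apply] at this
    simp only [swapsOn_apply] at this
    convert this using 1
    · refine Finset.sum_congr rfl fun u _ => ?_
      simp [coordAct_apply]
    · congr 1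
      refine Finset.sum_congr rfl fun u _ => ?_
      simp
  · intro j _
    ext u
    simpa [sumOn_apply, coordAct_apply] using hg j u

lemma multislice_comp {ℓ n : ℕ} {κ : Fin ℓ → ℕ} (u : Fin n → Fin ℓ) (σ : Equiv.Perm (Fin n)) :
    u ∘ σ ∈ multislice ℓ n κ ↔ u ∈ multislice ℓ n κ := by
  have : ∀ i, (Finset.univ.filter fun j => (u ∘ σ) j = i).card =
      (Finset.univ.filter fun j => u j = i).card := by
    intro i
    refine Finset.card_bij' (fun j _ => σ j) (fun j _ => σ⁻¹ j) ?_ ?_ ?_ ?_ <;> simp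
  simp only [multislice, Finset.mem_filter, Finset.mem_univ, true_and, this]

lemma multislice_trans {ℓ n : ℕ} {κ : Fin ℓ → ℕ} {u v : Fin n → Fin ℓ}
    (hu : u ∈ multislice ℓ n κ) (hv : v ∈ multislice ℓ n κ) (j : Fin n) (h : u j = v j) :
    ∃ τ ∈ permsOn (Finset.univ.erase j), v = u ∘ τ := by
  obtain ⟨σ, hσ⟩ : ∃ σ : Equiv.Perm (Fin n), ∀ k, u (σ k) = v k := by
    have e : ∀ c, Nonempty ({a // v a = c} ≃ {a // u a = c}) := by
      intro c
      rw [← Fintype.card_eq, Fintype.card_subtype, Fintype.card_subtype]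
      simp only [multislice, Finset.mem_filter, Finset.mem_univ, true_and] at hu hv
      rw [hu c, hv c]
    exact ⟨Equiv.ofFiberEquiv fun c => (e c).some, fun k => Equiv.ofFiberEquiv_map _ k⟩
  refine ⟨Equiv.swap j (σ j) * σ, ?_, ?_⟩
  · rw [mem_permsOn]
    intro x hx
    have : x = j := by simpa using hx
    subst this
    simp
  · ext1 k
    rw [← hσ k]
    simp only [Function.comp_apply, Equiv.Perm.mul_apply]
    have hj : u (σ j) = u j := by rw [hσ, h]
    rcases eq_or_ne (σ k) j with h1 | h1
    · rw [h1, Equiv.swap_apply_left, hj]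
    · rcases eq_or_ne (σ k) (σ j) with h2 | h2
      · rw [h2, Equiv.swap_apply_right, hj]
      · rw [Equiv.swap_apply_of_ne_of_ne h1 h2]

lemma degreeOne_coord {ℓ n : ℕ} {κ : Fin ℓ → ℕ} (j : Fin n) (F : (Fin n → Fin ℓ) → ℝ)
    (φ : Fin ℓ → ℝ) (h : ∀ u ∈ multislice ℓ n κ, F u = φ (u j)) : degreeOne ℓ n κ F := by
  refine ⟨0, fun j' i => if j' = j then φ i else 0, fun u hu => ?_⟩
  rw [h u hu]
  simp [xvar, Finset.sum_ite_eq]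

lemma orth_vanish {ℓ n : ℕ} {κ : Fin ℓ → ℕ} (g : (Fin n → Fin ℓ) → ℝ)
    (horth : ∀ h, degreeOne ℓ n κ h → ∑ u, g u * h u = 0) (j : Fin n) (u : Fin n → Fin ℓ) :
    ∑ σ ∈ permsOn (Finset.univ.erase j), g (u ∘ σ) = 0 := by
  have hv : ∀ v : EuclideanSpace ℝ (Fin n → Fin ℓ), ∀ w : Fin n → Fin ℓ,
      sumOn (coordAct ℓ n) (Finset.univ.erase j) v w =
      ∑ σ ∈ permsOn (Finset.univ.erase j), v (w ∘ σ) := by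
    intro v w
    simp [sumOn_apply, coordAct_apply]
  have hz : sumOn (coordAct ℓ n) (Finset.univ.erase j) (WithLp.toLp 2 g) = 0 := by
    rw [← inner_self_eq_zero (𝕜 := ℝ), sumOn_inner _ coordAct_adj]
    have hd : degreeOne ℓ n κ
        (fun w => sumOn (coordAct ℓ n) (Finset.univ.erase j) (WithLp.toLp 2 g) w) := by
      classical
      refine degreeOne_coord j _ (fun i => if h : ∃ w ∈ multislice ℓ n κ, w j = i then
        sumOn (coordAct ℓ n) (Finset.univ.erase j) (WithLp.toLp 2 g) h.choose else 0) ?_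
      intro w hw
      have hex : ∃ w' ∈ multislice ℓ n κ, w' j = w j := ⟨w, hw, rfl⟩
      rw [dif_pos hex]
      obtain ⟨τ, hτ, e⟩ := multislice_trans hw hex.choose_spec.1 j hex.choose_spec.2.symm
      rw [e, ← coordAct_apply, act_sumOn _ hτ]
    have := horth _ hd
    rw [PiLp.inner_apply]
    rw [mul_eq_zero]; right
    rw [← this]
    refine Finset.sum_congr rfl fun w _ => ?_
    simp [mul_comm]
  have := hv (WithLp.toLp 2 g) u
  rw [hz] at this
  exact this.symm

lemma sum_swap_coord {n : ℕ} (φ : Fin n → ℝ) (j : Fin n) :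
    ∑ a, ∑ b, φ (Equiv.swap a b j) = 2 * ∑ b, φ b + ((n : ℝ) ^ 2 - 2 * n) * φ j := by
  have e : ∀ a b, φ (Equiv.swap a b j) = φ j + (if a = j then φ b - φ j else 0)
      + (if b = j then φ a - φ j else 0) := by
    intro a b
    rcases eq_or_ne a j with h1 | h1
    · subst h1
      rcases eq_or_ne b a with h2 | h2
      · subst h2; simp
      · simp [h2]
    · rcases eq_or_ne b j with h2 | h2
      · subst h2; simp [h1]
      · simp [h1, h2, Equiv.swap_apply_of_ne_of_ne h1.symm h2.symm]
  simp only [e, Finset.sum_add_distrib, Finset.sum_ite_eq', Finset.mem_univ, if_true]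
  rw [Finset.sum_comm (f := fun a b => if a = j then φ b - φ j else 0)]
  simp only [Finset.sum_ite_eq', Finset.mem_univ, if_true, Finset.sum_sub_distrib]
  simp
  ring

lemma sum_color {ℓ n : ℕ} {κ : Fin ℓ → ℕ} {u : Fin n → Fin ℓ} (hu : u ∈ multislice ℓ n κ)
    (φ : Fin ℓ → ℝ) : ∑ b, φ (u b) = ∑ i, (κ i : ℝ) * φ i := by
  simp only [multislice, Finset.mem_filter, Finset.mem_univ, true_and] at hu
  rw [← Finset.sum_fiberwise (s := Finset.univ) (g := u)]
  refine Finset.sum_congr rfl fun i _ => ?_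
  rw [Finset.sum_congr rfl (g := fun _ => φ i), Finset.sum_const, hu i, nsmul_eq_mul]
  intro b hb
  rw [(Finset.mem_filter.1 hb).2]

lemma degreeOne_swaps {ℓ n : ℕ} {κ : Fin ℓ → ℕ} {p : (Fin n → Fin ℓ) → ℝ}
    (hp : degreeOne ℓ n κ p) : ∃ d : ℝ, ∀ u ∈ multislice ℓ n κ,
    ∑ a, ∑ b, p (u ∘ Equiv.swap a b) = ((n : ℝ) ^ 2 - 2 * n) * p u + d := by
  obtain ⟨c, coef, h⟩ := hp
  have h' : ∀ u ∈ multislice ℓ n κ, p u = c + ∑ j, coef j (u j) := by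
    intro u hu
    rw [h u hu]
    simp [xvar]
  refine ⟨2 * n * c + 2 * ∑ j, ∑ i, (κ i : ℝ) * coef j i, fun u hu => ?_⟩
  rw [Finset.sum_congr rfl fun a _ => Finset.sum_congr rfl fun b _ =>
    h' _ ((multislice_comp u (Equiv.swap a b)).2 hu), h' u hu]
  have e1 : ∑ a : Fin n, ∑ b : Fin n, ∑ j, coef j ((u ∘ Equiv.swap a b) j) =
      ∑ j, ∑ a : Fin n, ∑ b : Fin n, coef j (u (Equiv.swap a b j)) := by
    rw [Finset.sum_comm]
    simp only [Function.comp_apply]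
    rw [Finset.sum_congr rfl fun y _ => Finset.sum_comm]
    rw [Finset.sum_comm]
    exact Finset.sum_congr rfl fun j _ => Finset.sum_comm
  simp only [Finset.sum_add_distrib]
  rw [e1, Finset.sum_congr rfl fun j _ => sum_swap_coord (fun k => coef j (u k)) j]
  simp only [sum_color hu]
  simp only [Finset.sum_add_distrib, ← Finset.mul_sum]
  simp
  ring

lemma expansion_count {ℓ n : ℕ} (A : Finset (Fin n → Fin ℓ)) (f : (Fin n → Fin ℓ) → ℝ)
    (hf : ∀ u, f u = if u ∈ A then 1 else 0) :
    ∑ u ∈ A, ((Finset.univ.filter fun q : Fin n × Fin n =>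
      q.1 ≠ q.2 ∧ (u ∘ Equiv.swap q.1 q.2) ∉ A).card : ℝ) =
    (n : ℝ) ^ 2 * A.card - ∑ u, f u * ∑ a, ∑ b, f (u ∘ Equiv.swap a b) := by
  have e : ∑ u, f u * ∑ a, ∑ b, f (u ∘ Equiv.swap a b) =
      ∑ u ∈ A, ∑ a, ∑ b, f (u ∘ Equiv.swap a b) := by
    simp only [hf, ite_mul, one_mul, zero_mul]
    rw [← Finset.sum_filter]
    simp
  rw [e, eq_sub_iff_add_eq, ← Finset.sum_add_distrib]
  rw [Finset.sum_congr rfl (g := fun _ => (n : ℝ) ^ 2)]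
  · simp [mul_comm]
  intro u hu
  rw [Finset.card_filter]
  push_cast
  rw [← Finset.univ_product_univ, Finset.sum_product, ← Finset.sum_add_distrib]
  rw [Finset.sum_congr rfl (g := fun _ => (n : ℝ))]
  · simp [sq]
  intro a _
  rw [← Finset.sum_add_distrib, Finset.sum_congr rfl (g := fun _ => (1 : ℝ))]
  · simp
  intro b _
  rw [hf]
  rcases eq_or_ne a b with h | h
  · subst h
    simp [hu]
  · by_cases h2 : u ∘ Equiv.swap a b ∈ A <;> simp [h, h2]

lemma final_algebra (a m G n B : ℝ) (ha : 0 < a) (hm : 0 < m) (hn : 4 ≤ n)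
    (hB : B ≤ (n ^ 2 - 4 * (n - 1)) * G) :
    2 * (1 - a / m) / (n - 1) + 2 * (n - 2) / (n * (n - 1)) * (G / m) / (a / m) ≤
      (n ^ 2 * a - (B + ((n ^ 2 - 2 * n) * (a - G) + 2 * n * a / m * a))) / (a * (n * (n - 1))) := by
  have hn0 : 0 < n := by linarith
  have hn1 : 0 < n - 1 := by linarith
  rw [le_div_iff₀ (mul_pos ha (mul_pos hn0 hn1))]
  have : (2 * (1 - a / m) / (n - 1) + 2 * (n - 2) / (n * (n - 1)) * (G / m) / (a / m)) *
      (a * (n * (n - 1))) = 2 * n * a - 2 * n * a / m * a + 2 * (n - 2) * G := by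
    field_simp
  rw [this]
  linarith

end concretePart

/-- **Spectral lower bound on expansion.**  For a set `A` of volume `α` on a multislice on
`n ≥ 4` points, `Φ(A) ≥ 2(1-α)/(n-1) + (2(n-2)/(n(n-1)))·‖(1_A)^{>1}‖²/α`, where the
high-degree part of the indicator is expressed via the orthogonal projection `p = (1_A)^{≤1}`
onto the degree-one subspace. -/
theorem multislice_expansion_spectral_bound (ℓ n : ℕ) (hℓ : 2 ≤ ℓ) (hn : 4 ≤ n)
    (κ : Fin ℓ → ℕ) (hκ : ∀ i, 0 < κ i) (hsum : ∑ i, κ i = n)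
    (A : Finset (Fin n → Fin ℓ)) (hA : A ⊆ multislice ℓ n κ) (hne : A.Nonempty)
    (α : ℝ) (hα : msVol ℓ n κ A = α)
    (p : (Fin n → Fin ℓ) → ℝ) (hp : degreeOne ℓ n κ p)
    (horth : ∀ h : (Fin n → Fin ℓ) → ℝ, degreeOne ℓ n κ h →
      msExp ℓ n κ (fun u => ((if u ∈ A then (1 : ℝ) else 0) - p u) * h u) = 0) :
    2 * (1 - α) / ((n : ℝ) - 1) +
        (2 * ((n : ℝ) - 2) / ((n : ℝ) * ((n : ℝ) - 1))) *
          msExp ℓ n κ (fun u => ((if u ∈ A then (1 : ℝ) else 0) - p u) ^ 2) / α ≤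
      msExpansion ℓ n A := by
  classical
  set M := multislice ℓ n κ with hM
  have hMpos : (0 : ℝ) < M.card := by exact_mod_cast Finset.card_pos.2 (hne.mono hA)
  have hApos : (0 : ℝ) < A.card := by exact_mod_cast Finset.card_pos.2 hne
  have hnR : (4 : ℝ) ≤ n := by exact_mod_cast hn
  set f : (Fin n → Fin ℓ) → ℝ := fun u => if u ∈ A then 1 else 0 with hf
  set P : (Fin n → Fin ℓ) → ℝ := fun u => if u ∈ M then p u else 0 with hP
  set g : (Fin n → Fin ℓ) → ℝ := fun u => f u - P u with hg
  have hfoff : ∀ u, u ∉ M → f u = 0 := fun u hu => if_neg fun h => hu (hA h)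
  have hgoff : ∀ u, u ∉ M → g u = 0 := fun u hu => by
    simp only [hg]; rw [hfoff u hu]; simp [hP, hu]
  have hgon : ∀ u ∈ M, g u = (if u ∈ A then (1 : ℝ) else 0) - p u := fun u hu => by
    simp [hg, hf, hP, hu]
  have toM : ∀ F : (Fin n → Fin ℓ) → ℝ, (∀ u, u ∉ M → F u = 0) → ∑ u, F u = ∑ u ∈ M, F u :=
    fun F hF => (Finset.sum_subset (Finset.subset_univ _) fun u _ hu => hF u hu).symm
  have horth' : ∀ h, degreeOne ℓ n κ h → ∑ u, g u * h u = 0 := by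
    intro h hd
    have := horth h hd
    rw [msExp, div_eq_zero_iff] at this
    have := this.resolve_right hMpos.ne'
    rw [toM _ fun u hu => by rw [hgoff u hu, zero_mul], ← this]
    exact Finset.sum_congr rfl fun u hu => by rw [hgon u hu]
  have hGM : msExp ℓ n κ (fun u => ((if u ∈ A then (1 : ℝ) else 0) - p u) ^ 2) =
      (∑ u, g u ^ 2) / M.card := by
    rw [msExp, toM (fun u => g u ^ 2) fun u hu => by simp [hgoff u hu]]
    congr 1
    exact Finset.sum_congr rfl fun u hu => by rw [hgon u hu]
  have hbound := concrete_bound g (orth_vanish g horth')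
  obtain ⟨d, hd⟩ := degreeOne_swaps hp
  have hKP : ∀ u, ∑ a, ∑ b, P (u ∘ Equiv.swap a b) =
      ((n : ℝ) ^ 2 - 2 * n) * P u + (if u ∈ M then d else 0) := by
    intro u
    by_cases hu : u ∈ M
    · simp only [hP, hM, multislice_comp]
      rw [← hM]
      simp only [hu, if_true]
      exact hd u hu
    · simp only [hP, hM, multislice_comp]
      rw [← hM]
      simp [hu]
  have hg1 : ∑ u, g u = 0 := by
    have := horth' (fun _ => 1) ⟨1, 0, fun u _ => by simp⟩
    simpa using this
  have hgP : ∑ u, g u * P u = 0 := by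
    refine horth' P ?_
    obtain ⟨c, coef, h⟩ := hp
    exact ⟨c, coef, fun u hu => by rw [← h u hu]; simp [hP, hM, hu]⟩
  have hfP : ∀ u, f u = g u + P u := fun u => by simp [hg]
  have hsumf : ∑ u, f u = A.card := by simp [hf]
  have hsumf2 : ∑ u, f u ^ 2 = A.card := by simp [hf]
  have hsumP : ∑ u, P u = A.card := by
    rw [← hsumf, Finset.sum_congr rfl fun u _ => hfP u, Finset.sum_add_distrib, hg1, zero_add]
  have hP2 : ∑ u, P u ^ 2 = A.card - ∑ u, g u ^ 2 := by
    rw [← hsumf2]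
    have : ∑ u, f u ^ 2 = ∑ u, g u ^ 2 + 2 * ∑ u, g u * P u + ∑ u, P u ^ 2 := by
      rw [Finset.mul_sum, ← Finset.sum_add_distrib, ← Finset.sum_add_distrib]
      exact Finset.sum_congr rfl fun u _ => by rw [hfP u]; ring
    rw [this, hgP]; ring
  have hB : ∀ F H : (Fin n → Fin ℓ) → ℝ, ∑ u, F u * ∑ a, ∑ b, H (u ∘ Equiv.swap a b) =
      ∑ a, ∑ b, ∑ u, F u * H (u ∘ Equiv.swap a b) := by
    intro F H
    simp only [Finset.mul_sum]
    rw [Finset.sum_comm]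
    exact Finset.sum_congr rfl fun a _ => Finset.sum_comm
  have hBsymm : ∀ F H : (Fin n → Fin ℓ) → ℝ, ∑ u, F u * ∑ a, ∑ b, H (u ∘ Equiv.swap a b) =
      ∑ u, H u * ∑ a, ∑ b, F (u ∘ Equiv.swap a b) := by
    intro F H
    rw [hB, hB]
    refine Finset.sum_congr rfl fun a _ => Finset.sum_congr rfl fun b _ => ?_
    rw [← sum_comp_perm (Equiv.swap a b)]
    refine Finset.sum_congr rfl fun u _ => ?_
    have : (u ∘ Equiv.swap a b) ∘ Equiv.swap a b = u := by ext1 k; simp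
    rw [this, mul_comm]
  have hone : ∀ F : (Fin n → Fin ℓ) → ℝ, ∑ u, F u * (if u ∈ M then d else 0) =
      d * ∑ u ∈ M, F u := by
    intro F
    rw [toM _ fun u hu => by simp [hu], Finset.mul_sum]
    exact Finset.sum_congr rfl fun u hu => by simp [hu, mul_comm]
  have hPM : ∑ u ∈ M, P u = A.card := by
    rw [← hsumP, toM P fun u hu => by simp [hP, hu]]
  have hgM : ∑ u ∈ M, g u = 0 := by rw [← hg1, toM g hgoff]
  have hd' : d * M.card = 2 * n * A.card := by
    have h1 := hBsymm (fun _ => 1) P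
    simp only [one_mul] at h1
    rw [Finset.sum_congr rfl fun u _ => hKP u, Finset.sum_add_distrib, ← Finset.mul_sum,
      ← Finset.sum_mul, hsumP] at h1
    have h2 : ∑ u, (if u ∈ M then d else 0) = d * M.card := by
      simp [mul_comm]
    rw [h2] at h1
    simp at h1
    linarith
  have hBgP : ∑ u, g u * ∑ a, ∑ b, P (u ∘ Equiv.swap a b) = 0 := by
    simp only [hKP, mul_add, Finset.sum_add_distrib]
    rw [hone, hgM, mul_zero, add_zero]
    have h0 : ((n : ℝ) ^ 2 - 2 * n) * ∑ u, g u * P u = 0 := by rw [hgP, mul_zero]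
    rw [← h0, Finset.mul_sum]
    exact Finset.sum_congr rfl fun u _ => by ring
  have hBPP : ∑ u, P u * ∑ a, ∑ b, P (u ∘ Equiv.swap a b) =
      ((n : ℝ) ^ 2 - 2 * n) * (A.card - ∑ u, g u ^ 2) + d * A.card := by
    simp only [hKP, mul_add, Finset.sum_add_distrib]
    rw [hone, hPM, ← hP2, Finset.mul_sum]
    congr 1
    exact Finset.sum_congr rfl fun u _ => by ring
  have hBff : ∑ u, f u * ∑ a, ∑ b, f (u ∘ Equiv.swap a b) =
      ∑ u, g u * ∑ a, ∑ b, g (u ∘ Equiv.swap a b) +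
      (((n : ℝ) ^ 2 - 2 * n) * (A.card - ∑ u, g u ^ 2) + d * A.card) := by
    have h1 := hBsymm P g
    rw [hBgP] at h1
    simp only [hfP, Finset.sum_add_distrib, add_mul, mul_add]
    rw [hBgP, hBPP, h1]
    ring
  rw [msExpansion, expansion_count A f fun u => rfl, hBff, hGM, ← hα, msVol, ← hM]
  have hd2 : d = 2 * n * A.card / M.card := by
    rw [eq_div_iff hMpos.ne', hd']
  rw [hd2]
  exact final_algebra _ _ _ _ _ hApos hMpos hnR hbound
end
end
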